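/- arXiv:2303.13304 — 4 statements merged into one kernel-verified Lean document; each statement's English description precedes it below -/
import Mathlib

section
/- Two generalized Pauli matrices X^s Z^t and X^{s'} Z^{t'} on ℂ^d are UC-equivalent (i.e. there exists a unitary matrix W with W (X^s Z^t) W† ≈ X^{s'} Z^{t'}) if and only if gcd(s, t, d) = gcd(s', t', d). -/
open Matrix

/-- The primitive `d`-th root of unity `ω = e^{2πi/d}`. -/
noncomputable def omega (d : ℕ) : ℂ := Complex.exp (2 * Real.pi * Complex.I / d)

/-- The power `X^s` (for any integer `s`) of the shift matrix `X` on `ℂ^d`,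
`X|j⟩ = |j+1 mod d⟩`; its `(i,j)` entry is `1` iff `i ≡ j + s (mod d)`. -/
def Xpow (d : ℕ) (s : ℤ) : Matrix (Fin d) (Fin d) ℂ :=
  Matrix.of fun i j => if (i : ℤ) = (((j : ℕ) : ℤ) + s) % (d : ℤ) then (1 : ℂ) else 0

/-- The power `Z^t` (for any integer `t`) of the clock matrix `Z` on `ℂ^d`,
`Z|j⟩ = ω^j |j⟩`; it is diagonal with entries `ω^{t·j} = e^{2πi·t·j/d}`. -/
noncomputable def Zpow (d : ℕ) (t : ℤ) : Matrix (Fin d) (Fin d) ℂ :=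
  Matrix.diagonal fun j => Complex.exp (2 * Real.pi * Complex.I * (t : ℂ) * ((j : ℕ) : ℂ) / (d : ℂ))

/-- The generalized Pauli matrix `X^s Z^t` on `ℂ^d`. -/
noncomputable def GPM (d : ℕ) (s t : ℤ) : Matrix (Fin d) (Fin d) ℂ :=
  Xpow d s * Zpow d t

/-- `A ≈ B` : equality up to a unimodular (global phase) scalar. -/
def PhaseEq {n : Type*} (A B : Matrix n n ℂ) : Prop :=
  ∃ c : ℂ, ‖c‖ = 1 ∧ A = c • B


/-- The additive character `x ↦ e^{2πi x/n}` of `ℤ`. -/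
noncomputable def rootChar (n : ℕ) (x : ℤ) : ℂ :=
  Complex.exp (2 * Real.pi * Complex.I * (x : ℂ) / (n : ℂ))

theorem rootChar_zero (n : ℕ) : rootChar n 0 = 1 := by
  simp [rootChar]

theorem rootChar_add (n : ℕ) (x y : ℤ) : rootChar n (x + y) = rootChar n x * rootChar n y := by
  rw [rootChar, rootChar, rootChar, ← Complex.exp_add]
  congr 1
  push_cast
  ring

theorem rootChar_ne_zero (n : ℕ) (x : ℤ) : rootChar n x ≠ 0 :=
  Complex.exp_ne_zero _

theorem rootChar_eq_one_iff {n : ℕ} (hn : n ≠ 0) (x : ℤ) : rootChar n x = 1 ↔ (n : ℤ) ∣ x := by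
  have hn' : (n : ℂ) ≠ 0 := by exact_mod_cast hn
  rw [rootChar, Complex.exp_eq_one_iff]
  refine exists_congr fun m => ?_
  have hpi := Complex.two_pi_I_ne_zero
  rw [div_eq_iff hn', mul_comm (m : ℂ), mul_assoc _ (m : ℂ), mul_right_inj' hpi, mul_comm (m : ℂ)]
  exact_mod_cast Iff.rfl

theorem rootChar_eq_of_dvd_sub {n : ℕ} {x y : ℤ} (h : (n : ℤ) ∣ x - y) :
    rootChar n x = rootChar n y := by
  rcases eq_or_ne n 0 with rfl | hn
  · simp [rootChar]
  · rw [← sub_add_cancel x y, rootChar_add, (rootChar_eq_one_iff hn _).2 h, one_mul]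

theorem rootChar_two_mul (n : ℕ) (x : ℤ) : rootChar (2 * n) (2 * x) = rootChar n x := by
  rw [rootChar, rootChar]
  congr 1
  push_cast
  rw [mul_left_comm, mul_div_mul_left _ _ two_ne_zero]

theorem norm_rootChar (n : ℕ) (x : ℤ) : ‖rootChar n x‖ = 1 := by
  have h : 2 * Real.pi * Complex.I * (x : ℂ) / (n : ℂ)
      = ((2 * Real.pi * x / n : ℝ) : ℂ) * Complex.I := by
    push_cast
    ring
  rw [rootChar, h, Complex.norm_exp_ofReal_mul_I]

theorem star_rootChar (n : ℕ) (x : ℤ) : star (rootChar n x) = rootChar n (-x) := by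
  rw [rootChar, rootChar, Complex.star_def, ← Complex.exp_conj]
  congr 1
  simp [map_ofNat]

theorem rootChar_mul_natCast (n : ℕ) (x : ℤ) (k : ℕ) :
    rootChar n (x * k) = rootChar n x ^ k := by
  rw [rootChar, rootChar, ← Complex.exp_nat_mul]
  congr 1
  push_cast
  ring

theorem sum_rootChar_mul {n : ℕ} {x : ℤ} (h : ¬ (n : ℤ) ∣ x) :
    ∑ k : Fin n, rootChar n (x * (k : ℕ)) = 0 := by
  rcases eq_or_ne n 0 with rfl | hn
  · simp
  simp_rw [rootChar_mul_natCast]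
  rw [Fin.sum_univ_eq_sum_range (fun k => rootChar n x ^ k)]
  have h1 : rootChar n x - 1 ≠ 0 := sub_ne_zero.2 fun h' => h ((rootChar_eq_one_iff hn x).1 h')
  have h2 := mul_geom_sum (rootChar n x) n
  rw [← rootChar_mul_natCast, (rootChar_eq_one_iff hn _).2 (Dvd.intro_left _ rfl), sub_self] at h2
  exact (mul_eq_zero.1 h2).resolve_left h1

/-- The residue of an integer modulo `d`, as an index. -/
def residue (d : ℕ) [NeZero d] (x : ℤ) : Fin d :=
  ⟨(x % d).toNat, by
    have h : (0 : ℤ) < d := by exact_mod_cast NeZero.pos d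
    have := Int.emod_lt_of_pos x h
    have := Int.emod_nonneg x h.ne'
    omega⟩

theorem coe_fin_emod {d : ℕ} (j : Fin d) : ((j : ℕ) : ℤ) % d = (j : ℕ) :=
  Int.emod_eq_of_lt (by positivity) (by exact_mod_cast j.2)

section Entries

variable {d : ℕ} [NeZero d]

theorem coe_residue (x : ℤ) : (((residue d x : Fin d) : ℕ) : ℤ) = x % d := by
  have h : (d : ℤ) ≠ 0 := by exact_mod_cast NeZero.ne d
  exact Int.toNat_of_nonneg (Int.emod_nonneg x h)

theorem dvd_coe_residue_sub (x : ℤ) : (d : ℤ) ∣ ((residue d x : Fin d) : ℕ) - x := by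
  rw [coe_residue]
  exact ⟨-(x / d), by linarith [Int.mul_ediv_add_emod x d]⟩

theorem eq_residue_iff (i : Fin d) (x : ℤ) : i = residue d x ↔ (d : ℤ) ∣ (i : ℕ) - x := by
  rw [Fin.ext_iff, ← Nat.cast_inj (R := ℤ), coe_residue, eq_comm, ← Int.modEq_iff_dvd,
    Int.ModEq, coe_fin_emod]

theorem gpm_apply (s t : ℤ) (i j : Fin d) :
    GPM d s t i j = if (d : ℤ) ∣ (i : ℕ) - ((j : ℕ) + s) then rootChar d (t * (j : ℕ)) else 0 := by
  have h : ((i : ℕ) : ℤ) = (((j : ℕ) : ℤ) + s) % d ↔ (d : ℤ) ∣ (i : ℕ) - ((j : ℕ) + s) := by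
    rw [← eq_residue_iff, Fin.ext_iff, ← Nat.cast_inj (R := ℤ), coe_residue]
  simp only [GPM, Zpow, Xpow, Matrix.mul_diagonal, Matrix.of_apply, h, rootChar]
  split_ifs
  · rw [one_mul]
    congr 1
    push_cast
    ring
  · rw [zero_mul]

theorem mul_gpm_apply (M : Matrix (Fin d) (Fin d) ℂ) (s t : ℤ) (i j : Fin d) :
    (M * GPM d s t) i j = M i (residue d ((j : ℕ) + s)) * rootChar d (t * (j : ℕ)) := by
  simp only [Matrix.mul_apply, gpm_apply, ← eq_residue_iff]
  simp

theorem gpm_mul_apply (M : Matrix (Fin d) (Fin d) ℂ) (s t : ℤ) (i j : Fin d) :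
    (GPM d s t * M) i j =
      rootChar d (t * ((i : ℕ) - s)) * M (residue d ((i : ℕ) - s)) j := by
  have h (k : Fin d) : (d : ℤ) ∣ (i : ℕ) - ((k : ℕ) + s) ↔ k = residue d ((i : ℕ) - s) := by
    rw [eq_residue_iff, ← dvd_neg]
    ring_nf
  simp only [Matrix.mul_apply, gpm_apply, h]
  simp only [ite_mul, zero_mul, Finset.sum_ite_eq', Finset.mem_univ, if_true]
  congr 1
  apply rootChar_eq_of_dvd_sub
  rw [← mul_sub]
  exact (dvd_coe_residue_sub _).mul_left _

theorem gpm_mul_gpm (s t s' t' : ℤ) :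
    GPM d s t * GPM d s' t' = rootChar d (t * s') • GPM d (s + s') (t + t') := by
  ext i j
  rw [mul_gpm_apply, Matrix.smul_apply, gpm_apply, gpm_apply, smul_eq_mul]
  have hres := dvd_coe_residue_sub (d := d) ((j : ℕ) + s')
  have h : (d : ℤ) ∣ (i : ℕ) - (((residue d ((j : ℕ) + s') : Fin d) : ℕ) + s) ↔
      (d : ℤ) ∣ (i : ℕ) - ((j : ℕ) + (s + s')) := by
    rw [← dvd_add_left hres]
    ring_nf
  simp only [h]
  split_ifs
  · rw [← rootChar_add, ← rootChar_add]
    apply rootChar_eq_of_dvd_sub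
    obtain ⟨m, hm⟩ := hres
    exact ⟨t * m, by linear_combination t * hm⟩
  · simp

theorem gpm_congr {s t s' t' : ℤ} (hs : (d : ℤ) ∣ s - s') (ht : (d : ℤ) ∣ t - t') :
    GPM d s t = GPM d s' t' := by
  ext i j
  have h : (d : ℤ) ∣ (i : ℕ) - ((j : ℕ) + s) ↔ (d : ℤ) ∣ (i : ℕ) - ((j : ℕ) + s') := by
    rw [← dvd_add_left hs]
    ring_nf
  simp only [gpm_apply, h]
  congr 1
  apply rootChar_eq_of_dvd_sub
  rw [← sub_mul]
  exact ht.mul_right _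

theorem gpm_zero_zero : GPM d 0 0 = 1 := by
  ext i j
  have h : (d : ℤ) ∣ (i : ℕ) - ((j : ℕ) + 0) ↔ i = j := by
    rw [← eq_residue_iff, Fin.ext_iff, Fin.ext_iff, ← Nat.cast_inj (R := ℤ), coe_residue,
      add_zero, coe_fin_emod, Nat.cast_inj]
  simp only [gpm_apply, h, zero_mul, rootChar_zero, Matrix.one_apply]

theorem exists_gpm_pow_eq_smul (s t : ℤ) (k : ℕ) :
    ∃ c : ℂ, c ≠ 0 ∧ GPM d s t ^ k = c • GPM d (k * s) (k * t) := by
  induction k with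
  | zero => exact ⟨1, one_ne_zero, by simp [gpm_zero_zero]⟩
  | succ k ih =>
    obtain ⟨c, hc, h⟩ := ih
    refine ⟨c * rootChar d (k * t * s), mul_ne_zero hc (rootChar_ne_zero _ _), ?_⟩
    rw [pow_succ, h, Matrix.smul_mul, gpm_mul_gpm, smul_smul]
    push_cast
    simp only [add_mul, one_mul]

theorem dvd_of_gpm_eq_smul_one (hd : 2 ≤ d) {s t : ℤ} {c : ℂ} (h : GPM d s t = c • 1) :
    (d : ℤ) ∣ s ∧ (d : ℤ) ∣ t := by
  have hs : (d : ℤ) ∣ s := by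
    have h0 := congrFun (congrFun h (residue d s)) ⟨0, by omega⟩
    rw [gpm_apply, if_pos (by simpa using dvd_coe_residue_sub s)] at h0
    have hne : residue d s = ⟨0, by omega⟩ := by
      by_contra hne
      rw [Matrix.smul_apply, Matrix.one_apply_ne hne, smul_zero] at h0
      exact rootChar_ne_zero _ _ h0
    have := dvd_coe_residue_sub (d := d) s
    rw [hne] at this
    simpa using this
  refine ⟨hs, ?_⟩
  have h0 := congrFun (congrFun h ⟨0, by omega⟩) ⟨0, by omega⟩
  have h1 := congrFun (congrFun h ⟨1, by omega⟩) ⟨1, by omega⟩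
  rw [gpm_apply, if_pos (by simpa using hs)] at h0 h1
  simp only [Nat.cast_zero, mul_zero, rootChar_zero, Nat.cast_one, mul_one, Matrix.smul_apply,
    Matrix.one_apply_eq, smul_eq_mul] at h0 h1
  rwa [← h0, rootChar_eq_one_iff (NeZero.ne d)] at h1

end Entries

/-- Unitary conjugacy of matrices up to a phase. -/
def UCEquiv {n : Type*} [Fintype n] [DecidableEq n] (A B : Matrix n n ℂ) : Prop :=
  ∃ W ∈ Matrix.unitaryGroup n ℂ, PhaseEq (W * A * Wᴴ) B

namespace UCEquiv

variable {n : Type*} [Fintype n] [DecidableEq n] {A B C : Matrix n n ℂ}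

theorem refl (A : Matrix n n ℂ) : UCEquiv A A :=
  ⟨1, one_mem _, 1, by simp, by simp⟩

theorem trans (hAB : UCEquiv A B) (hBC : UCEquiv B C) : UCEquiv A C := by
  obtain ⟨W, hW, c, hc, h⟩ := hAB
  obtain ⟨V, hV, b, hb, h'⟩ := hBC
  refine ⟨V * W, mul_mem hV hW, c * b, by simp [hc, hb], ?_⟩
  calc V * W * A * (V * W)ᴴ = V * (W * A * Wᴴ) * Vᴴ := by
        simp only [Matrix.conjTranspose_mul, Matrix.mul_assoc]
    _ = (c * b) • C := by
        rw [h, Matrix.mul_smul, Matrix.smul_mul, h', smul_smul]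

theorem symm (h : UCEquiv A B) : UCEquiv B A := by
  obtain ⟨W, hW, c, hc, h⟩ := h
  have hc0 : c ≠ 0 := by
    rintro rfl
    simp at hc
  refine ⟨Wᴴ, Unitary.star_mem hW, c⁻¹, by simp [hc], ?_⟩
  have hWW : Wᴴ * W = 1 := Matrix.mem_unitaryGroup_iff'.1 hW
  have hB : B = c⁻¹ • (W * A * Wᴴ) := by rw [h, smul_smul, inv_mul_cancel₀ hc0, one_smul]
  calc Wᴴ * B * Wᴴᴴ = c⁻¹ • ((Wᴴ * W) * A * (Wᴴ * W)) := by
        rw [hB]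
        simp only [Matrix.conjTranspose_conjTranspose, Matrix.mul_smul, Matrix.smul_mul,
          Matrix.mul_assoc]
    _ = c⁻¹ • A := by rw [hWW, Matrix.one_mul, Matrix.mul_one]

theorem of_intertwine {W : Matrix n n ℂ} (hW : W ∈ Matrix.unitaryGroup n ℂ) {c : ℂ}
    (hc : ‖c‖ = 1) (h : W * A = c • (B * W)) : UCEquiv A B := by
  refine ⟨W, hW, c, hc, ?_⟩
  have hWW : W * Wᴴ = 1 := Matrix.mem_unitaryGroup_iff.1 hW
  rw [h, Matrix.smul_mul, Matrix.mul_assoc, hWW, Matrix.mul_one]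

theorem pow_eq_smul_one (h : UCEquiv A B) {k : ℕ} {a : ℂ} (hA : A ^ k = a • 1) :
    ∃ b : ℂ, B ^ k = b • 1 := by
  obtain ⟨W, hW, c, -, h⟩ := h.symm
  have hWW : Wᴴ * W = 1 := Matrix.mem_unitaryGroup_iff'.1 hW
  have hB : B = Wᴴ * (c • A) * W := by
    rw [← h]
    calc B = (Wᴴ * W) * B * (Wᴴ * W) := by rw [hWW, Matrix.one_mul, Matrix.mul_one]
      _ = _ := by simp only [Matrix.mul_assoc]
  have hWW' : W * Wᴴ = 1 := Matrix.mem_unitaryGroup_iff.1 hW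
  have hpow : B ^ k = Wᴴ * (c • A) ^ k * W := by
    rw [hB]
    exact Units.conj_pow' ⟨W, Wᴴ, hWW', hWW⟩ (c • A) k
  refine ⟨c ^ k * a, ?_⟩
  rw [hpow, smul_pow, hA, smul_smul, Matrix.mul_smul, Matrix.mul_one, Matrix.smul_mul, hWW]

end UCEquiv

/-- The discrete Fourier transform matrix, normalised to be unitary. -/
noncomputable def fourierMatrix (d : ℕ) : Matrix (Fin d) (Fin d) ℂ :=
  Matrix.of fun i j => ((√(d : ℝ) : ℝ) : ℂ)⁻¹ * rootChar d ((i : ℕ) * (j : ℕ))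

theorem fourierMatrix_mem_unitaryGroup (d : ℕ) [NeZero d] :
    fourierMatrix d ∈ Matrix.unitaryGroup (Fin d) ℂ := by
  have hd : (d : ℂ) ≠ 0 := by exact_mod_cast NeZero.ne d
  have hsq : ((√(d : ℝ) : ℝ) : ℂ)⁻¹ * ((√(d : ℝ) : ℝ) : ℂ)⁻¹ = (d : ℂ)⁻¹ := by
    rw [← mul_inv, ← Complex.ofReal_mul, Real.mul_self_sqrt (by positivity),
      Complex.ofReal_natCast]
  rw [Matrix.mem_unitaryGroup_iff]
  ext i j
  have hterm (k : Fin d) : fourierMatrix d i k * star (fourierMatrix d) k j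
      = (d : ℂ)⁻¹ * rootChar d (((i : ℕ) - (j : ℕ) : ℤ) * (k : ℕ)) := by
    rw [Matrix.star_apply, fourierMatrix, Matrix.of_apply, Matrix.of_apply, star_mul',
      star_rootChar, Complex.star_def, map_inv₀, Complex.conj_ofReal, mul_mul_mul_comm, hsq,
      ← rootChar_add]
    congr 2
    ring
  rw [Matrix.mul_apply, Finset.sum_congr rfl fun k _ => hterm k, ← Finset.mul_sum]
  rcases eq_or_ne i j with rfl | hij
  · simp [rootChar_zero, hd]
  · rw [sum_rootChar_mul, mul_zero, Matrix.one_apply_ne hij]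
    intro h
    apply hij
    rw [← eq_residue_iff] at h
    rw [h, Fin.ext_iff, ← Nat.cast_inj (R := ℤ), coe_residue, coe_fin_emod]

/-- The chirp matrix: diagonal with entries the `k`-th powers of `e^{πi j(j+d)/d}`. -/
noncomputable def chirpMatrix (d : ℕ) (k : ℤ) : Matrix (Fin d) (Fin d) ℂ :=
  Matrix.diagonal fun j => rootChar (2 * d) (k * ((j : ℕ) * ((j : ℕ) + d)))

theorem chirpMatrix_mem_unitaryGroup (d : ℕ) (k : ℤ) :
    chirpMatrix d k ∈ Matrix.unitaryGroup (Fin d) ℂ := by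
  rw [Matrix.mem_unitaryGroup_iff, chirpMatrix, Matrix.star_eq_conjTranspose,
    Matrix.diagonal_conjTranspose, Matrix.diagonal_mul_diagonal, ← Matrix.diagonal_one]
  congr 1
  ext j
  rw [Pi.star_apply, star_rootChar, ← rootChar_add, add_neg_cancel, rootChar_zero]

section Equivalences

variable {d : ℕ} [NeZero d]

theorem uCEquiv_gpm_fourier (s t : ℤ) : UCEquiv (GPM d s t) (GPM d (-t) s) := by
  refine .of_intertwine (fourierMatrix_mem_unitaryGroup d) (norm_rootChar d (-(s * t))) ?_
  ext i j
  rw [mul_gpm_apply, Matrix.smul_apply, gpm_mul_apply, smul_eq_mul, fourierMatrix,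
    Matrix.of_apply, Matrix.of_apply]
  rw [mul_left_comm (rootChar d _) (_⁻¹), mul_left_comm (rootChar d _) (_⁻¹), mul_assoc,
    ← rootChar_add, ← rootChar_add, ← rootChar_add]
  congr 1
  apply rootChar_eq_of_dvd_sub
  obtain ⟨a, ha⟩ := dvd_coe_residue_sub (d := d) ((j : ℕ) + s)
  obtain ⟨b, hb⟩ := dvd_coe_residue_sub (d := d) ((i : ℕ) - -t)
  rw [sub_eq_iff_eq_add] at ha hb
  rw [ha, hb]
  exact ⟨(i : ℕ) * a - (j : ℕ) * b, by ring⟩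

theorem uCEquiv_gpm_chirp (s t k : ℤ) : UCEquiv (GPM d s t) (GPM d s (t + k * s)) := by
  refine .of_intertwine (chirpMatrix_mem_unitaryGroup d k)
    (norm_rootChar (2 * d) (k * (s * (s + d)))) ?_
  ext i j
  rw [Matrix.smul_apply, chirpMatrix, Matrix.diagonal_mul, Matrix.mul_diagonal, gpm_apply,
    gpm_apply, smul_eq_mul]
  split_ifs with h
  · obtain ⟨m, hm⟩ := h
    rw [sub_eq_iff_eq_add] at hm
    obtain ⟨r, hr⟩ := (Int.even_mul_succ_self m).two_dvd
    rw [← rootChar_two_mul d (t * _), ← rootChar_two_mul d ((t + k * s) * _), ← rootChar_add,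
      ← rootChar_add, ← rootChar_add]
    apply rootChar_eq_of_dvd_sub
    rw [hm]
    refine ⟨k * (m * ((j : ℕ) + s) + d * r), ?_⟩
    push_cast
    linear_combination (k * d ^ 2 : ℤ) * hr
  · simp

theorem uCEquiv_gpm_zero_gcd (s t : ℤ) : UCEquiv (GPM d s t) (GPM d 0 (Int.gcd s t)) := by
  induction hn : s.natAbs using Nat.strong_induction_on generalizing s t with
  | _ n ih =>
    rcases eq_or_ne s 0 with rfl | hs
    · rw [Int.gcd_zero_left]
      rcases Int.natAbs_eq t with h | h
      · rw [← h]
        exact .refl _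
      · have h' : ((t.natAbs : ℕ) : ℤ) = -t := by omega
        rw [h']
        have h2 := (uCEquiv_gpm_fourier (d := d) 0 t).trans (uCEquiv_gpm_fourier (-t) 0)
        rwa [neg_zero] at h2
    · have h1 := uCEquiv_gpm_chirp (d := d) s t (-(t / s))
      have h2 := uCEquiv_gpm_fourier (d := d) s (t + -(t / s) * s)
      have hmod : t + -(t / s) * s = t % s := by linarith [Int.mul_ediv_add_emod t s]
      rw [hmod] at h1 h2
      have hlt : (-(t % s)).natAbs < n := by
        have := Int.emod_nonneg t hs
        have := Int.emod_lt_abs t hs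
        rw [Int.abs_eq_natAbs] at this
        omega
      have h3 := ih _ hlt (-(t % s)) s rfl
      have hgcd : Int.gcd (-(t % s)) s = Int.gcd s t := by
        rw [Int.neg_gcd, Int.gcd_comm s t, Int.gcd_emod]
      rw [hgcd] at h3
      exact (h1.trans h2).trans h3

theorem uCEquiv_gpm_zero_gcd_gcd (s t : ℤ) :
    UCEquiv (GPM d s t) (GPM d 0 (Int.gcd s (Int.gcd t (d : ℤ) : ℤ))) := by
  have h1 := uCEquiv_gpm_zero_gcd (d := d) s t
  have h2 := uCEquiv_gpm_zero_gcd (d := d) d (Int.gcd s t)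
  have h3 : GPM d d (Int.gcd s t) = GPM d 0 (Int.gcd s t) := gpm_congr (by simp) (by simp)
  rw [h3, Int.gcd_comm (d : ℤ), Int.gcd_assoc] at h2
  exact h1.trans h2

theorem gcd_dvd_gcd_of_uCEquiv (hd : 2 ≤ d) {s t s' t' : ℤ}
    (h : UCEquiv (GPM d s t) (GPM d s' t')) :
    Int.gcd s (Int.gcd t (d : ℤ) : ℤ) ∣ Int.gcd s' (Int.gcd t' (d : ℤ) : ℤ) := by
  have hg : Int.gcd s (Int.gcd t (d : ℤ) : ℤ) ∣ d := by
    have := (Int.gcd_dvd_right s (Int.gcd t (d : ℤ) : ℤ)).trans (Int.gcd_dvd_right t (d : ℤ))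
    exact_mod_cast this
  have hgs : ((Int.gcd s (Int.gcd t (d : ℤ) : ℤ) : ℕ) : ℤ) ∣ s := Int.gcd_dvd_left ..
  have hgt : ((Int.gcd s (Int.gcd t (d : ℤ) : ℤ) : ℕ) : ℤ) ∣ t :=
    (Int.gcd_dvd_right s (Int.gcd t (d : ℤ) : ℤ)).trans (Int.gcd_dvd_left t (d : ℤ))
  generalize Int.gcd s (Int.gcd t (d : ℤ) : ℤ) = g at hg hgs hgt ⊢
  obtain ⟨k, hk⟩ := hg
  have hkd : (d : ℤ) = k * g := by
    rw [mul_comm]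
    exact_mod_cast hk
  have hk0 : (k : ℤ) ≠ 0 := by
    rintro h0
    rw [h0, zero_mul] at hkd
    omega
  obtain ⟨a, -, ha⟩ := exists_gpm_pow_eq_smul (d := d) s t k
  have hscalar : GPM d (k * s) (k * t) = 1 := by
    rw [← gpm_zero_zero]
    apply gpm_congr <;> rw [sub_zero, hkd]
    · exact mul_dvd_mul_left _ hgs
    · exact mul_dvd_mul_left _ hgt
  rw [hscalar] at ha
  obtain ⟨b, hb⟩ := h.pow_eq_smul_one ha
  obtain ⟨c, hc, hc'⟩ := exists_gpm_pow_eq_smul (d := d) s' t' k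
  have hB : GPM d (k * s') (k * t') = (c⁻¹ * b) • 1 := by
    rw [← smul_smul, ← hb, hc', smul_smul, inv_mul_cancel₀ hc, one_smul]
  obtain ⟨h1, h2⟩ := dvd_of_gpm_eq_smul_one hd hB
  rw [hkd] at h1 h2
  have hgd : (g : ℤ) ∣ d := ⟨k, by rw [hkd, mul_comm]⟩
  have := Int.dvd_coe_gcd ((mul_dvd_mul_iff_left hk0).1 h1)
    (Int.dvd_coe_gcd ((mul_dvd_mul_iff_left hk0).1 h2) hgd)
  exact_mod_cast this

end Equivalences

/-- Two GPMs `X^s Z^t` and `X^{s'} Z^{t'}` on `ℂ^d` are UC-equivalent iff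
`gcd(s, t, d) = gcd(s', t', d)`. -/
theorem gpm_uc_equiv_iff_gcd_eq (d : ℕ) (hd : 2 ≤ d) (s t s' t' : ℤ) :
    (∃ W ∈ Matrix.unitaryGroup (Fin d) ℂ,
        PhaseEq (W * GPM d s t * Wᴴ) (GPM d s' t')) ↔
    Int.gcd s (Int.gcd t (d : ℤ) : ℤ) = Int.gcd s' (Int.gcd t' (d : ℤ) : ℤ) := by
  have : NeZero d := ⟨by omega⟩
  constructor
  · intro h
    exact Nat.dvd_antisymm (gcd_dvd_gcd_of_uCEquiv hd h)
      (gcd_dvd_gcd_of_uCEquiv hd (UCEquiv.symm h))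
  · intro h
    have h1 := uCEquiv_gpm_zero_gcd_gcd (d := d) s t
    rw [h] at h1
    exact h1.trans (uCEquiv_gpm_zero_gcd_gcd s' t').symm
end

section
/- Let a and b be positive divisors of d with a < d and b < d, and let u be an integer. There exists a unitary matrix W on ℂ^d with W X^a W† ≈ X^{ua} and W Z^b W† ≈ Z^b if and only if gcd(u, d/a) = 1 and u·a·b ≡ a·b (mod d). -/
open Matrix

/-- `e^{2πi m/d}` depends exactly on the residue of `m` modulo `d`. -/
theorem exp_two_pi_mul_div_eq_iff {d : ℕ} (hd : d ≠ 0) (m n : ℤ) :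
    Complex.exp (2 * Real.pi * Complex.I * (m : ℂ) / (d : ℂ)) =
      Complex.exp (2 * Real.pi * Complex.I * (n : ℂ) / (d : ℂ)) ↔ m ≡ n [ZMOD d] := by
  have hd' : (d : ℂ) ≠ 0 := by exact_mod_cast hd
  have hpi := Complex.two_pi_I_ne_zero
  rw [Complex.exp_eq_exp_iff_exists_int, Int.modEq_comm, Int.modEq_iff_dvd]
  refine exists_congr fun k => ?_
  have key : 2 * Real.pi * Complex.I * (m : ℂ) / (d : ℂ) =
      2 * Real.pi * Complex.I * (n : ℂ) / (d : ℂ) + k * (2 * Real.pi * Complex.I) ↔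
      (m : ℂ) - n = d * k := by
    rw [← sub_eq_zero, ← sub_eq_zero (a := (m : ℂ) - n)]
    have : 2 * Real.pi * Complex.I * (m : ℂ) / (d : ℂ) -
        (2 * Real.pi * Complex.I * (n : ℂ) / (d : ℂ) + k * (2 * Real.pi * Complex.I)) =
        (2 * Real.pi * Complex.I / d) * ((m : ℂ) - n - d * k) := by
      field_simp
      ring
    rw [this, mul_eq_zero, or_iff_right (div_ne_zero hpi hd')]
  rw [key]
  exact_mod_cast Iff.rfl

theorem Fin.eq_emod_iff_modEq {d : ℕ} (i : Fin d) (m : ℤ) :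
    (i : ℤ) = m % (d : ℤ) ↔ (i : ℤ) ≡ m [ZMOD d] := by
  have hi : ((i : ℕ) : ℤ) % d = i :=
    Int.emod_eq_of_lt (by positivity) (by exact_mod_cast i.isLt)
  rw [Int.ModEq, hi]

theorem Xpow_apply {d : ℕ} (s : ℤ) (i j : Fin d) :
    Xpow d s i j = if (i : ℤ) ≡ (j : ℤ) + s [ZMOD d] then 1 else 0 := by
  simp only [Xpow, Matrix.of_apply, Fin.eq_emod_iff_modEq]

/-- The residue of an integer modulo `d`, as an index. -/
def residueIndex {d : ℕ} (hd : d ≠ 0) (m : ℤ) : Fin d :=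
  ⟨(m % d).toNat, by
    have := Int.emod_lt_of_pos m (b := d) (by omega)
    have := Int.emod_nonneg m (b := d) (by omega)
    omega⟩

theorem residueIndex_modEq {d : ℕ} (hd : d ≠ 0) (m : ℤ) :
    ((residueIndex hd m : ℕ) : ℤ) ≡ m [ZMOD d] := by
  have := Int.emod_nonneg m (b := d) (by omega)
  simp only [residueIndex, Int.toNat_of_nonneg this]
  exact Int.mod_modEq m d

theorem Fin.eq_of_intModEq {d : ℕ} {i j : Fin d} (h : (i : ℤ) ≡ (j : ℤ) [ZMOD d]) : i = j := by
  rw [← Fin.eq_emod_iff_modEq,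
    Int.emod_eq_of_lt (by positivity) (by exact_mod_cast j.isLt)] at h
  exact Fin.ext (by exact_mod_cast h)

theorem Xpow_eq_one_of_dvd {d : ℕ} {s : ℤ} (hs : (d : ℤ) ∣ s) : Xpow d s = 1 := by
  ext i j
  have h : (j : ℤ) + s ≡ j [ZMOD d] := by
    rw [Int.modEq_comm, Int.modEq_iff_dvd]
    simpa using hs
  rw [Xpow_apply, Matrix.one_apply]
  refine if_congr ⟨fun hij => Fin.eq_of_intModEq (hij.trans h), ?_⟩ rfl rfl
  rintro rfl
  exact h.symm

theorem Xpow_mul_Xpow {d : ℕ} (hd : d ≠ 0) (s t : ℤ) :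
    Xpow d s * Xpow d t = Xpow d (s + t) := by
  ext i j
  rw [Matrix.mul_apply, Finset.sum_eq_single (residueIndex hd (j + t))]
  · rw [Xpow_apply, Xpow_apply, Xpow_apply, if_pos (residueIndex_modEq hd _), mul_one]
    have h := (residueIndex_modEq hd ((j : ℤ) + t)).add_right s
    have h' : (j : ℤ) + (s + t) = j + t + s := by ring
    rw [h']
    exact if_congr ⟨fun k => k.trans h, fun k => k.trans h.symm⟩ rfl rfl
  · intro k _ hk
    rw [Xpow_apply t, if_neg, mul_zero]
    exact fun h => hk (Fin.eq_of_intModEq (h.trans (residueIndex_modEq hd _).symm))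
  · simp

theorem Xpow_pow {d : ℕ} (hd : d ≠ 0) (s : ℤ) (n : ℕ) : Xpow d s ^ n = Xpow d (n * s) := by
  induction n with
  | zero => simp [Xpow_eq_one_of_dvd]
  | succ n ih =>
    rw [pow_succ, ih, Xpow_mul_Xpow hd]
    congr 1
    push_cast
    ring

theorem dvd_of_Xpow_eq_smul_one {d : ℕ} (hd : d ≠ 0) {s : ℤ} {c : ℂ}
    (h : Xpow d s = c • (1 : Matrix (Fin d) (Fin d) ℂ)) : (d : ℤ) ∣ s := by
  have hr := residueIndex_modEq hd s
  have h0 := residueIndex_modEq hd 0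
  have hij : residueIndex hd s = residueIndex hd 0 := by
    by_contra hne
    have := congr_fun (congr_fun h (residueIndex hd s)) (residueIndex hd 0)
    rw [Xpow_apply, if_pos, Matrix.smul_apply, Matrix.one_apply_ne hne] at this
    · simp at this
    · exact hr.trans (by simpa using (h0.add_right s).symm)
  rw [hij] at hr
  exact Int.modEq_zero_iff_dvd.mp (hr.symm.trans h0)

theorem Zpow_mul_Xpow {d : ℕ} (hd : d ≠ 0) (s t : ℤ) :
    Zpow d t * Xpow d s =
      Complex.exp (2 * Real.pi * Complex.I * ((s * t : ℤ) : ℂ) / (d : ℂ)) •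
        (Xpow d s * Zpow d t) := by
  ext i j
  rw [Zpow, Matrix.diagonal_mul, Matrix.smul_apply, Matrix.mul_diagonal, Xpow_apply]
  split_ifs with h
  · rw [mul_one, one_mul, smul_eq_mul, ← Complex.exp_add]
    have key := (exp_two_pi_mul_div_eq_iff hd (t * i) (s * t + t * j)).mpr (by
      have := h.mul_left t
      rwa [mul_add, mul_comm t s, add_comm] at this)
    push_cast at key ⊢
    convert key using 2 <;> ring
  · simp

theorem Xpow_mul_Zpow_ne_zero {d : ℕ} (hd : d ≠ 0) (s t : ℤ) : Xpow d s * Zpow d t ≠ 0 := by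
  intro h
  have := congr_fun (congr_fun h (residueIndex hd ((residueIndex hd 0 : ℕ) + s)))
    (residueIndex hd 0)
  rw [Zpow, Matrix.mul_diagonal, Xpow_apply, if_pos (residueIndex_modEq hd _)] at this
  simp at this

section Conjugation

variable {n : Type*} [Fintype n] [DecidableEq n] {W : Matrix n n ℂ}

theorem conj_mul_conj_of_unitary (hW : Wᴴ * W = 1) (A B : Matrix n n ℂ) :
    (W * A * Wᴴ) * (W * B * Wᴴ) = W * (A * B) * Wᴴ := by
  calc (W * A * Wᴴ) * (W * B * Wᴴ) = W * A * (Wᴴ * W) * B * Wᴴ := by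
        simp only [Matrix.mul_assoc]
    _ = W * (A * B) * Wᴴ := by rw [hW]; simp only [Matrix.mul_assoc, Matrix.one_mul]

theorem conj_pow_of_unitary (hW : Wᴴ * W = 1) (hW' : W * Wᴴ = 1) (A : Matrix n n ℂ) (k : ℕ) :
    (W * A * Wᴴ) ^ k = W * A ^ k * Wᴴ := by
  induction k with
  | zero => simp [hW']
  | succ k ih => rw [pow_succ, ih, conj_mul_conj_of_unitary hW, pow_succ]

theorem eq_smul_one_of_conj_eq_smul_one (hW : Wᴴ * W = 1) {A : Matrix n n ℂ} {c : ℂ}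
    (h : W * A * Wᴴ = c • 1) : A = c • 1 := by
  calc A = (Wᴴ * W) * A * (Wᴴ * W) := by rw [hW]; simp
    _ = Wᴴ * (W * A * Wᴴ) * W := by simp only [Matrix.mul_assoc]
    _ = c • 1 := by rw [h]; simp [hW]

theorem exists_unitary_conj_eq_submatrix (e : Equiv.Perm n) :
    ∃ W ∈ Matrix.unitaryGroup n ℂ, ∀ A : Matrix n n ℂ, W * A * Wᴴ = A.submatrix e e := by
  have key : ∀ A : Matrix n n ℂ,
      (1 : Matrix n n ℂ).submatrix e id * A * ((1 : Matrix n n ℂ).submatrix e id)ᴴ =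
        A.submatrix e e := by
    intro A
    ext i j
    simp [Matrix.mul_apply, Matrix.one_apply, apply_ite]
  refine ⟨(1 : Matrix n n ℂ).submatrix e id, ?_, key⟩
  rw [Matrix.mem_unitaryGroup_iff, Matrix.star_eq_conjTranspose]
  simpa using key 1

end Conjugation

/-- The map `r + a k ↦ r + u a k` on the integers, where `0 ≤ r < a`. -/
def blockScale (a u x : ℤ) : ℤ := x % a + u * a * (x / a)

theorem blockScale_add_self {a : ℤ} (ha : a ≠ 0) (u x : ℤ) :
    blockScale a u (x + a) = blockScale a u x + u * a := by
  simp only [blockScale, Int.add_emod_right, Int.add_ediv_of_dvd_right (dvd_refl a),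
    Int.ediv_self ha]
  ring

theorem blockScale_modEq_iff {a m u : ℤ} (ha : a ≠ 0) (hu : IsCoprime m u) (x y : ℤ) :
    blockScale a u x ≡ blockScale a u y [ZMOD a * m] ↔ x ≡ y [ZMOD a * m] := by
  have hx := Int.emod_add_mul_ediv x a
  have hy := Int.emod_add_mul_ediv y a
  have hres : x % a = y % a →
      (blockScale a u x ≡ blockScale a u y [ZMOD a * m] ↔ x ≡ y [ZMOD a * m]) := by
    intro hr
    have h1 : blockScale a u y - blockScale a u x = a * (u * (y / a - x / a)) := by
      simp only [blockScale, hr]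
      ring
    have h2 : y - x = a * (y / a - x / a) := by
      linear_combination -hy + hx - hr
    rw [Int.modEq_iff_dvd, Int.modEq_iff_dvd, h1, h2, mul_dvd_mul_iff_left ha,
      mul_dvd_mul_iff_left ha]
    exact ⟨hu.dvd_of_dvd_mul_left, fun h => h.mul_left u⟩
  refine ⟨fun h => (hres ?_).mp h, fun h => (hres ?_).mpr h⟩
  · have h' := h.of_mul_right m
    simpa [Int.ModEq, blockScale, mul_assoc, mul_left_comm u a] using h'
  · exact h.of_mul_right m

theorem mul_blockScale_modEq {a b d u : ℤ} (h : u * a * b ≡ a * b [ZMOD d]) (x : ℤ) :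
    b * blockScale a u x ≡ b * x [ZMOD d] := by
  have hx := Int.emod_add_mul_ediv x a
  have key := (h.mul_right (x / a)).add_left (b * (x % a))
  convert key using 1
  · simp only [blockScale]; ring
  · linear_combination -b * hx

theorem exists_unitary_of_isCoprime {d a m : ℕ} (hd : d ≠ 0) (hm : d = a * m) {b u : ℤ}
    (hu : IsCoprime (m : ℤ) u) (hab : u * a * b ≡ a * b [ZMOD d]) :
    ∃ W ∈ Matrix.unitaryGroup (Fin d) ℂ,
      W * Xpow d a * Wᴴ = Xpow d (u * a) ∧ W * Zpow d b * Wᴴ = Zpow d b := by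
  have ha : (a : ℤ) ≠ 0 := by
    rintro h
    exact hd (by rw [hm, Int.natCast_eq_zero.mp h, zero_mul])
  have hiff : ∀ x y : ℤ,
      blockScale a u x ≡ blockScale a u y [ZMOD d] ↔ x ≡ y [ZMOD d] := by
    intro x y
    rw [hm, Nat.cast_mul]
    exact blockScale_modEq_iff ha hu x y
  let f : Fin d → Fin d := fun j => residueIndex hd (blockScale a u j)
  have hf : ∀ j : Fin d, ((f j : ℕ) : ℤ) ≡ blockScale a u j [ZMOD d] :=
    fun j => residueIndex_modEq hd _
  have hinj : Function.Injective f := by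
    intro i j hij
    have hi := hf i
    rw [hij] at hi
    exact Fin.eq_of_intModEq ((hiff i j).mp (hi.symm.trans (hf j)))
  let σ : Equiv.Perm (Fin d) := Equiv.ofBijective f (Finite.injective_iff_bijective.mp hinj)
  obtain ⟨W, hW, hconj⟩ := exists_unitary_conj_eq_submatrix σ.symm
  have hσ : ∀ A B : Matrix (Fin d) (Fin d) ℂ, (∀ i j, A i j = B (f i) (f j)) →
      W * A * Wᴴ = B := by
    intro A B h
    rw [hconj]
    ext i j
    rw [Matrix.submatrix_apply, h]
    exact congr_arg₂ B (σ.apply_symm_apply i) (σ.apply_symm_apply j)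
  refine ⟨W, hW, hσ _ _ fun i j => ?_, hσ _ _ fun i j => ?_⟩
  · rw [Xpow_apply, Xpow_apply]
    refine if_congr ?_ rfl rfl
    rw [← hiff, blockScale_add_self ha]
    exact ⟨fun h => (hf i).trans (h.trans ((hf j).symm.add_right _)),
      fun h => (hf i).symm.trans (h.trans ((hf j).add_right _))⟩
  · rw [Zpow]
    by_cases hij : i = j
    · subst hij
      rw [Matrix.diagonal_apply_eq, Matrix.diagonal_apply_eq]
      have key := (exp_two_pi_mul_div_eq_iff hd (b * i) (b * f i)).mpr
        ((mul_blockScale_modEq hab i).symm.trans ((hf i).symm.mul_left b))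
      push_cast at key
      simpa only [mul_assoc] using key
    · rw [Matrix.diagonal_apply_ne _ hij, Matrix.diagonal_apply_ne _ (hinj.ne hij)]

theorem modEq_of_conj {d : ℕ} (hd : d ≠ 0) {W : Matrix (Fin d) (Fin d) ℂ} (hW : Wᴴ * W = 1)
    {s s' t : ℤ} {c e : ℂ} (hc : c ≠ 0) (he : e ≠ 0)
    (hX : W * Xpow d s * Wᴴ = c • Xpow d s') (hZ : W * Zpow d t * Wᴴ = e • Zpow d t) :
    s' * t ≡ s * t [ZMOD d] := by
  have h := conj_mul_conj_of_unitary hW (Zpow d t) (Xpow d s)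
  rw [Zpow_mul_Xpow hd, Matrix.mul_smul, Matrix.smul_mul,
    ← conj_mul_conj_of_unitary hW (Xpow d s) (Zpow d t), hX, hZ] at h
  simp only [Matrix.smul_mul, Matrix.mul_smul, Zpow_mul_Xpow hd s' t, smul_smul] at h
  have h' := smul_left_injective ℂ (Xpow_mul_Zpow_ne_zero hd s' t) h
  rw [← exp_two_pi_mul_div_eq_iff hd]
  refine mul_left_cancel₀ (mul_ne_zero he hc) ?_
  linear_combination h'

theorem dvd_mul_of_conj {d : ℕ} (hd : d ≠ 0) {W : Matrix (Fin d) (Fin d) ℂ}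
    (hW : Wᴴ * W = 1) (hW' : W * Wᴴ = 1) {s s' : ℤ} {c : ℂ}
    (hX : W * Xpow d s * Wᴴ = c • Xpow d s') {k : ℕ} (hk : (d : ℤ) ∣ k * s') :
    (d : ℤ) ∣ k * s := by
  have h := conj_pow_of_unitary hW hW' (Xpow d s) k
  rw [hX, smul_pow, Xpow_pow hd, Xpow_pow hd, Xpow_eq_one_of_dvd hk] at h
  exact dvd_of_Xpow_eq_smul_one hd (eq_smul_one_of_conj_eq_smul_one hW h.symm)

/-- **Lemma 3.2.** For positive divisors `a, b` of `d` with `a, b < d` and an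
integer `u`, there is a unitary `W` with `W X^a W† ≈ X^{ua}` and `W Z^b W† ≈ Z^b` iff
`gcd(u, d/a) = 1` and `u·a·b ≡ a·b (mod d)`. -/
theorem conj_Xa_to_Xua_iff (d : ℕ) (hd : 2 ≤ d) (a b : ℕ)
    (ha : a ∣ d) (hb : b ∣ d) (ha0 : 0 < a) (hb0 : 0 < b) (had : a < d) (hbd : b < d)
    (u : ℤ) :
    (∃ W ∈ Matrix.unitaryGroup (Fin d) ℂ,
        PhaseEq (W * Xpow d (a : ℤ) * Wᴴ) (Xpow d (u * a)) ∧
        PhaseEq (W * Zpow d (b : ℤ) * Wᴴ) (Zpow d (b : ℤ))) ↔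
    (Int.gcd u ((d / a : ℕ) : ℤ) = 1 ∧ u * a * b ≡ (a : ℤ) * b [ZMOD (d : ℤ)]) := by
  have hd0 : d ≠ 0 := by omega
  obtain ⟨m, hm⟩ := ha
  have hdiv : d / a = m := by rw [hm, Nat.mul_div_cancel_left m ha0]
  have hm0 : m ≠ 0 := by
    rintro rfl
    exact hd0 (by simpa using hm)
  rw [hdiv]
  constructor
  · rintro ⟨W, hW, ⟨c, hc, hX⟩, e, he, hZ⟩
    have hWl : Wᴴ * W = 1 := Matrix.mem_unitaryGroup_iff'.mp hW
    have hWr : W * Wᴴ = 1 := Matrix.mem_unitaryGroup_iff.mp hW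
    have hc0 : c ≠ 0 := norm_ne_zero_iff.mp (by simp [hc])
    have he0 : e ≠ 0 := norm_ne_zero_iff.mp (by simp [he])
    refine ⟨?_, modEq_of_conj hd0 hWl hc0 he0 hX hZ⟩
    obtain ⟨v, hv⟩ : (Int.gcd u m : ℤ) ∣ u := Int.gcd_dvd_left ..
    obtain ⟨k, hk⟩ : Int.gcd u m ∣ m := by exact_mod_cast Int.gcd_dvd_right u (m : ℤ)
    have hdk : (d : ℤ) ∣ k * (u * a) := by
      refine ⟨v, ?_⟩
      have hk' : (m : ℤ) = Int.gcd u m * k := by exact_mod_cast hk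
      rw [hm]
      push_cast
      linear_combination (k : ℤ) * a * hv - a * v * hk'
    have hdvd := dvd_mul_of_conj hd0 hWl hWr hX hdk
    have hmk : m ∣ k := by
      have : a * m ∣ a * k := by
        rw [← hm, mul_comm a k]
        exact_mod_cast hdvd
      exact (mul_dvd_mul_iff_left ha0.ne').mp this
    have hkm : m = k := Nat.dvd_antisymm hmk ⟨_, hk.trans (mul_comm _ _)⟩
    rw [← hkm] at hk
    exact Nat.eq_of_mul_eq_mul_right (Nat.pos_of_ne_zero hm0) (by rw [← hk, one_mul])
  · rintro ⟨hu, hab⟩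
    obtain ⟨W, hW, hX, hZ⟩ :=
      exists_unitary_of_isCoprime hd0 hm (Int.isCoprime_iff_gcd_eq_one.mpr hu).symm hab
    exact ⟨W, hW, ⟨1, by simp, by rw [hX, one_smul]⟩, 1, by simp, by rw [hZ, one_smul]⟩
end

section
/- Let a be a positive divisor of d and u an integer with gcd(u, d/a) = 1. Define the map W on the computational basis of ℂ^d by W|i + ja⟩ = |i + uja mod d⟩ for 0 ≤ i ≤ a−1 and 0 ≤ j < d/a. Then W is a well-defined permutation matrix (in particular unitary), W X^a W† = X^{ua}, and if moreover b is a positive divisor of d with u·a·b ≡ a·b (mod d), then W Z^b W† = Z^b. -/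
open Matrix

/-- The permutation map `W` defined on the computational basis of `ℂ^d` by
`W|i + ja⟩ = |i + uja mod d⟩` for `0 ≤ i ≤ a-1`, `0 ≤ j < d/a`: writing a column index
`c = i + ja` with `i = c % a`, `j = c / a`, the `(r, c)` entry is `1` iff
`r ≡ (c % a) + u·(c / a)·a (mod d)`. -/
def Wmap (d a : ℕ) (u : ℤ) : Matrix (Fin d) (Fin d) ℂ :=
  Matrix.of fun r c =>
    if (r : ℤ) = ((((c : ℕ) % a : ℕ) : ℤ) + u * (((c : ℕ) / a : ℕ) : ℤ) * (a : ℤ)) % (d : ℤ)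
    then (1 : ℂ) else 0

/-- The integer map `i + ja ↦ i + uja` (with `0 ≤ i < a`) underlying `Wmap`. -/
def scaleQuot (a u x : ℤ) : ℤ := x % a + u * (x / a) * a

theorem scaleQuot_add_mul {a : ℤ} (ha : a ≠ 0) (u x k : ℤ) :
    scaleQuot a u (x + a * k) = scaleQuot a u x + u * k * a := by
  unfold scaleQuot
  rw [Int.add_mul_emod_self_left, Int.add_mul_ediv_left x k ha]
  ring

theorem scaleQuot_eq_add (a u x : ℤ) :
    scaleQuot a u x = x + (u - 1) * a * (x / a) := by
  unfold scaleQuot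
  linear_combination Int.emod_add_mul_ediv x a

/-- If `u` is coprime to `n`, then `scaleQuot a u` induces an injection on `ℤ/anℤ`. -/
theorem scaleQuot_modEq_iff {a n u : ℤ} (ha : a ≠ 0) (hu : IsCoprime u n) (x y : ℤ) :
    scaleQuot a u x ≡ scaleQuot a u y [ZMOD a * n] ↔ x ≡ y [ZMOD a * n] := by
  constructor
  · intro h
    have hxy : a ∣ y - x := by
      have h₁ : a ∣ scaleQuot a u y - scaleQuot a u x := (dvd_mul_right a n).trans h.dvd
      rw [scaleQuot_eq_add, scaleQuot_eq_add] at h₁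
      obtain ⟨m, hm⟩ := h₁
      exact ⟨m - (u - 1) * (y / a - x / a), by linear_combination hm⟩
    obtain ⟨k, hk⟩ := hxy
    obtain rfl : y = x + a * k := by linarith
    have h₁ := h.dvd
    rw [scaleQuot_add_mul ha, add_sub_cancel_left, mul_comm (u * k) a,
      mul_dvd_mul_iff_left ha] at h₁
    refine Int.modEq_iff_dvd.mpr ?_
    rw [add_sub_cancel_left]
    exact mul_dvd_mul_left a (hu.symm.dvd_of_dvd_mul_left h₁)
  · intro h
    obtain ⟨k, hk⟩ := h.dvd
    obtain rfl : y = x + a * (n * k) := by linarith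
    rw [scaleQuot_add_mul ha]
    refine Int.modEq_iff_dvd.mpr ⟨u * k, ?_⟩
    ring

theorem Fin.cast_eq_emod_iff {d : ℕ} (i : Fin d) (x : ℤ) :
    (i : ℤ) = x % (d : ℤ) ↔ (i : ℤ) ≡ x [ZMOD d] := by
  rw [Int.ModEq, Int.emod_eq_of_lt (Int.natCast_nonneg i) (Int.ofNat_lt.mpr i.isLt)]

theorem Fin.eq_iff_cast_modEq {d : ℕ} (i j : Fin d) :
    i = j ↔ (i : ℤ) ≡ (j : ℤ) [ZMOD d] := by
  rw [← Fin.cast_eq_emod_iff, Int.emod_eq_of_lt (Int.natCast_nonneg j) (Int.ofNat_lt.mpr j.isLt),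
    Fin.ext_iff, Nat.cast_inj]

theorem exists_perm_modEq_scaleQuot {d : ℕ} [NeZero d] {a n u : ℤ} (ha : a ≠ 0)
    (hd : (d : ℤ) = a * n) (hu : IsCoprime u n) :
    ∃ σ : Equiv.Perm (Fin d), ∀ c : Fin d, (σ c : ℤ) ≡ scaleQuot a u c [ZMOD d] := by
  have hd0 : (d : ℤ) ≠ 0 := Nat.cast_ne_zero.mpr (NeZero.ne d)
  have hex (c : Fin d) : ∃ r : Fin d, (r : ℤ) ≡ scaleQuot a u c [ZMOD d] := by
    have h₀ := Int.emod_nonneg (scaleQuot a u c) hd0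
    have h₁ := Int.emod_lt_of_pos (scaleQuot a u c) (by lia : (0 : ℤ) < d)
    refine ⟨⟨(scaleQuot a u c % d).toNat, by lia⟩, ?_⟩
    rw [← Fin.cast_eq_emod_iff]
    exact Int.toNat_of_nonneg h₀
  choose f hf using hex
  have hinj : Function.Injective f := by
    intro x y hxy
    rw [Fin.eq_iff_cast_modEq, hd, ← scaleQuot_modEq_iff ha hu, ← hd]
    exact (hf x).symm.trans (hxy ▸ hf y)
  exact ⟨Equiv.ofBijective f (Finite.injective_iff_bijective.mp hinj), hf⟩

theorem Wmap_apply {d a : ℕ} {u : ℤ} {σ : Equiv.Perm (Fin d)}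
    (hσ : ∀ c : Fin d, (σ c : ℤ) ≡ scaleQuot a u c [ZMOD d]) (r c : Fin d) :
    Wmap d a u r c = if r = σ c then 1 else 0 := by
  have h : ((((c : ℕ) % a : ℕ) : ℤ) + u * (((c : ℕ) / a : ℕ) : ℤ) * (a : ℤ)) =
      scaleQuot a u c := by
    simp [scaleQuot]
  rw [Wmap, Matrix.of_apply, h]
  refine if_congr ?_ rfl rfl
  rw [Fin.cast_eq_emod_iff, Fin.eq_iff_cast_modEq]
  exact ⟨fun h => h.trans (hσ c).symm, fun h => h.trans (hσ c)⟩

/-- Conjugation by a permutation matrix reindexes rows and columns. -/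
theorem Matrix.perm_conj_eq_submatrix {ι : Type*} [Fintype ι] [DecidableEq ι]
    {W : Matrix ι ι ℂ} {σ : Equiv.Perm ι} (hW : ∀ r c, W r c = if r = σ c then 1 else 0)
    (M : Matrix ι ι ℂ) : W * M * Wᴴ = M.submatrix σ.symm σ.symm := by
  ext i j
  simp [Matrix.mul_apply, hW, ← Equiv.symm_apply_eq, apply_ite (star : ℂ → ℂ)]

theorem Xpow_apply_perm {d : ℕ} {a n u : ℤ} (ha : a ≠ 0) (hd : (d : ℤ) = a * n)
    (hu : IsCoprime u n) {σ : Equiv.Perm (Fin d)}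
    (hσ : ∀ c : Fin d, (σ c : ℤ) ≡ scaleQuot a u c [ZMOD d]) (p q : Fin d) :
    Xpow d (u * a) (σ p) (σ q) = Xpow d a p q := by
  rw [Xpow, Xpow, Matrix.of_apply, Matrix.of_apply]
  refine if_congr ?_ rfl rfl
  rw [Fin.cast_eq_emod_iff, Fin.cast_eq_emod_iff]
  have hshift := scaleQuot_add_mul ha u q 1
  rw [mul_one, mul_one] at hshift
  have hq : (σ q : ℤ) + u * a ≡ scaleQuot a u (q + a) [ZMOD d] :=
    hshift ▸ (hσ q).add_right _
  have hiff := scaleQuot_modEq_iff ha hu p (q + a)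
  rw [← hd] at hiff
  rw [← hiff]
  exact ⟨fun h => (hσ p).symm.trans (h.trans hq), fun h => (hσ p).trans (h.trans hq.symm)⟩

theorem exp_two_pi_mul_div_eq_of_modEq {d : ℕ} [NeZero d] {x y : ℤ} (h : x ≡ y [ZMOD d]) :
    Complex.exp (2 * Real.pi * Complex.I * x / d) =
      Complex.exp (2 * Real.pi * Complex.I * y / d) := by
  obtain ⟨k, hk⟩ := h.symm.dvd
  have hd0 : (d : ℂ) ≠ 0 := Nat.cast_ne_zero.mpr (NeZero.ne d)
  refine Complex.exp_eq_exp_iff_exists_int.mpr ⟨k, ?_⟩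
  have hx : (x : ℂ) = y + d * k := by
    exact_mod_cast (by linarith : x = y + d * k)
  rw [hx]
  field_simp

theorem mul_perm_modEq {d : ℕ} {a b u : ℤ} (hb : u * a * b ≡ a * b [ZMOD d])
    {σ : Equiv.Perm (Fin d)} (hσ : ∀ c : Fin d, (σ c : ℤ) ≡ scaleQuot a u c [ZMOD d])
    (p : Fin d) : b * (σ p : ℤ) ≡ b * (p : ℤ) [ZMOD d] := by
  refine ((hσ p).mul_left b).trans (Int.modEq_iff_dvd.mpr ?_)
  rw [scaleQuot_eq_add]
  obtain ⟨m, hm⟩ := hb.dvd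
  exact ⟨m * ((p : ℤ) / a), by linear_combination ((p : ℤ) / a) * hm⟩

/-- If `a` is a positive divisor of `d` and `gcd(u, d/a) = 1`, then the map
`W|i + ja⟩ = |i + uja mod d⟩` is a well-defined permutation matrix (in particular unitary),
`W X^a W† = X^{ua}`, and for any positive divisor `b` of `d` with `u·a·b ≡ a·b (mod d)` one has
`W Z^b W† = Z^b`. -/
theorem Wmap_perm_unitary_conj (d a : ℕ) (hd : 2 ≤ d) (ha0 : 0 < a) (ha : a ∣ d)
    (u : ℤ) (hu : Int.gcd u ((d / a : ℕ) : ℤ) = 1) :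
    (∃ σ : Equiv.Perm (Fin d), ∀ r c : Fin d, Wmap d a u r c = if r = σ c then 1 else 0) ∧
    Wmap d a u ∈ Matrix.unitaryGroup (Fin d) ℂ ∧
    Wmap d a u * Xpow d (a : ℤ) * (Wmap d a u)ᴴ = Xpow d (u * a) ∧
    (∀ b : ℕ, 0 < b → b ∣ d → u * a * b ≡ (a : ℤ) * b [ZMOD (d : ℤ)] →
      Wmap d a u * Zpow d (b : ℤ) * (Wmap d a u)ᴴ = Zpow d (b : ℤ)) := by
  obtain ⟨n, rfl⟩ := ha
  have hne : NeZero (a * n) := ⟨by lia⟩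
  rw [Nat.mul_div_cancel_left n ha0] at hu
  have hcop : IsCoprime u (n : ℤ) := Int.isCoprime_iff_gcd_eq_one.mpr hu
  have haz : (a : ℤ) ≠ 0 := Nat.cast_ne_zero.mpr ha0.ne'
  have hdz : ((a * n : ℕ) : ℤ) = a * n := Nat.cast_mul a n
  obtain ⟨σ, hσ⟩ := exists_perm_modEq_scaleQuot haz hdz hcop
  have hW := Wmap_apply hσ
  refine ⟨⟨σ, hW⟩, ?_, ?_, ?_⟩
  · rw [Matrix.mem_unitaryGroup_iff, Matrix.star_eq_conjTranspose]
    simpa using Matrix.perm_conj_eq_submatrix hW 1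
  · rw [Matrix.perm_conj_eq_submatrix hW]
    ext i j
    simpa using (Xpow_apply_perm haz hdz hcop hσ (σ.symm i) (σ.symm j)).symm
  · intro b _ _ hb
    rw [Matrix.perm_conj_eq_submatrix hW, Zpow, Matrix.submatrix_diagonal_equiv]
    congr 1
    ext i
    have h := exp_two_pi_mul_div_eq_of_modEq (mul_perm_modEq hb hσ (σ.symm i))
    rw [Equiv.apply_symm_apply] at h
    simpa [mul_assoc] using h.symm
end

section
/- Let a and b be positive divisors of d with a < d and b < d, and let u₁, v₁, u₂, v₂ be integers with 0 ≤ u₁, v₁ < d/a and 0 ≤ u₂, v₂ < d/b. There exists a unitary matrix W on ℂ^d with W X^a W† ≈ X^{u₁ a} Z^{v₁ a} and W Z^b W† ≈ X^{u₂ b} Z^{v₂ b} if and only if all three of the following hold: (1) gcd(u₁, v₁, d/a) = 1 = gcd(u₂, v₂, d/b); (2) (u₁v₂ − u₂v₁)·a·b ≡ a·b (mod d); and (3) gcd(u₁v₂ − u₂v₁, d/a, d/b) = 1. -/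
open Matrix

namespace GeneralizedPauli

/-- The additive character `n ↦ ω^n` of `ℤ`. -/
noncomputable def phase (d : ℕ) (n : ℤ) : ℂ :=
  Complex.exp (2 * Real.pi * Complex.I * (n : ℂ) / (d : ℂ))

lemma phase_add (d : ℕ) (m n : ℤ) : phase d (m + n) = phase d m * phase d n := by
  rw [phase, phase, phase, ← Complex.exp_add]
  congr 1
  push_cast
  ring

lemma phase_zero (d : ℕ) : phase d 0 = 1 := by simp [phase]

lemma phase_ne_zero (d : ℕ) (n : ℤ) : phase d n ≠ 0 := Complex.exp_ne_zero _

lemma norm_phase (d : ℕ) (n : ℤ) : ‖phase d n‖ = 1 := by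
  have h : 2 * Real.pi * Complex.I * (n : ℂ) / (d : ℂ)
      = ((2 * Real.pi * n / d : ℝ) : ℂ) * Complex.I := by
    push_cast
    ring
  rw [phase, h, Complex.norm_exp_ofReal_mul_I]

lemma star_phase (d : ℕ) (n : ℤ) : star (phase d n) = phase d (-n) := by
  have h : phase d (-n) * phase d n = 1 := by rw [← phase_add, neg_add_cancel, phase_zero]
  have h' : star (phase d n) * phase d n = 1 := by
    have := Complex.conj_mul' (phase d n)
    simpa [norm_phase] using this
  exact mul_right_cancel₀ (phase_ne_zero d n) (h'.trans h.symm)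

lemma Zpow_eq (d : ℕ) (t : ℤ) : Zpow d t = Matrix.diagonal fun j : Fin d => phase d (t * (j : ℕ)) := by
  rw [Zpow]
  congr 1
  funext j
  rw [phase]
  congr 1
  push_cast
  ring

lemma mul_Zpow_apply {d : ℕ} (M : Matrix (Fin d) (Fin d) ℂ) (t : ℤ) (i j : Fin d) :
    (M * Zpow d t) i j = M i j * phase d (t * (j : ℕ)) := by
  simp [Zpow_eq, Matrix.mul_diagonal]

lemma Zpow_zero (d : ℕ) : Zpow d 0 = 1 := by
  simp [Zpow]

lemma GPM_zero_right (d : ℕ) (s : ℤ) : GPM d s 0 = Xpow d s := by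
  rw [GPM, Zpow_zero, mul_one]

section

variable {d : ℕ} [NeZero d]

lemma phase_eq_one_iff (n : ℤ) : phase d n = 1 ↔ (d : ℤ) ∣ n := by
  have hd : (d : ℂ) ≠ 0 := Nat.cast_ne_zero.mpr (NeZero.ne d)
  rw [phase, Complex.exp_eq_one_iff]
  constructor
  · rintro ⟨k, hk⟩
    refine ⟨k, ?_⟩
    have h2 : (2 * Real.pi * Complex.I : ℂ) ≠ 0 := Complex.two_pi_I_ne_zero
    rw [div_eq_iff hd] at hk
    have : (n : ℂ) = d * k := mul_left_cancel₀ h2 (by rw [hk]; ring)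
    exact_mod_cast this
  · rintro ⟨k, rfl⟩
    refine ⟨k, ?_⟩
    push_cast
    field_simp

lemma phase_eq_phase_iff (m n : ℤ) : phase d m = phase d n ↔ m ≡ n [ZMOD d] := by
  have h : phase d n = phase d m * phase d (n - m) := by
    rw [← phase_add]
    congr 1
    ring
  rw [h, eq_comm, mul_eq_left₀ (phase_ne_zero d m), phase_eq_one_iff, Int.modEq_iff_dvd]

/-- The residue of an integer modulo `d`, as an element of `Fin d`. -/
def residue (d : ℕ) [NeZero d] (n : ℤ) : Fin d :=
  ⟨(n % d).toNat, by
    have h : (d : ℤ) ≠ 0 := Nat.cast_ne_zero.mpr (NeZero.ne d)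
    have := Int.emod_nonneg n h
    have := Int.emod_lt_of_pos n (by positivity : (0 : ℤ) < d)
    omega⟩

lemma coe_residue (n : ℤ) : (((residue d n : Fin d) : ℕ) : ℤ) = n % d :=
  Int.toNat_of_nonneg (Int.emod_nonneg n (Nat.cast_ne_zero.mpr (NeZero.ne d)))

lemma residue_modEq (n : ℤ) : (((residue d n : Fin d) : ℕ) : ℤ) ≡ n [ZMOD d] := by
  rw [coe_residue]
  exact Int.mod_modEq n d

lemma residue_eq_iff (m n : ℤ) : residue d m = residue d n ↔ m ≡ n [ZMOD d] := by
  rw [Int.ModEq, ← coe_residue, ← coe_residue, Nat.cast_inj, Fin.ext_iff]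

lemma residue_coe (j : Fin d) : residue d ((j : ℕ) : ℤ) = j := by
  apply Fin.ext
  have : (((residue d ((j : ℕ) : ℤ) : Fin d) : ℕ) : ℤ) = (j : ℕ) := by
    rw [coe_residue]
    exact Int.emod_eq_of_lt (by positivity) (by exact_mod_cast j.2)
  exact_mod_cast this

lemma Xpow_apply (s : ℤ) (i j : Fin d) :
    Xpow d s i j = if i = residue d ((j : ℕ) + s) then 1 else 0 := by
  simp only [Xpow, Matrix.of_apply, ← coe_residue, Nat.cast_inj, Fin.ext_iff]

lemma mul_Xpow_apply (M : Matrix (Fin d) (Fin d) ℂ) (s : ℤ) (i j : Fin d) :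
    (M * Xpow d s) i j = M i (residue d ((j : ℕ) + s)) := by
  simp [Matrix.mul_apply, Xpow_apply]

lemma GPM_apply (s t : ℤ) (i j : Fin d) :
    GPM d s t i j = if i = residue d ((j : ℕ) + s) then phase d (t * (j : ℕ)) else 0 := by
  rw [GPM, mul_Zpow_apply, Xpow_apply, ite_mul, one_mul, zero_mul]

lemma mul_GPM_apply (M : Matrix (Fin d) (Fin d) ℂ) (s t : ℤ) (i j : Fin d) :
    (M * GPM d s t) i j = M i (residue d ((j : ℕ) + s)) * phase d (t * (j : ℕ)) := by
  rw [GPM, ← Matrix.mul_assoc, mul_Zpow_apply, mul_Xpow_apply]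

lemma phase_mul_residue (t n : ℤ) :
    phase d (t * ((residue d n : Fin d) : ℕ)) = phase d (t * n) :=
  (phase_eq_phase_iff _ _).2 ((residue_modEq n).mul_left t)

lemma GPM_mul (s t s' t' : ℤ) :
    GPM d s t * GPM d s' t' = phase d (t * s') • GPM d (s + s') (t + t') := by
  ext i j
  rw [mul_GPM_apply, Matrix.smul_apply, GPM_apply, GPM_apply, phase_mul_residue]
  have h : residue d (((residue d ((j : ℕ) + s') : Fin d) : ℕ) + s)
      = residue d ((j : ℕ) + (s + s')) := by
    rw [residue_eq_iff]
    have := (residue_modEq (d := d) ((j : ℕ) + s')).add_right s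
    rwa [show ((j : ℕ) : ℤ) + s' + s = (j : ℕ) + (s + s') by ring] at this
  rw [h, smul_eq_mul]
  split_ifs
  · rw [← phase_add, ← phase_add]
    congr 1
    ring
  · simp

lemma GPM_congr {s s' t t' : ℤ} (hs : s ≡ s' [ZMOD d]) (ht : t ≡ t' [ZMOD d]) :
    GPM d s t = GPM d s' t' := by
  ext i j
  rw [GPM_apply, GPM_apply, (residue_eq_iff _ _).2 (hs.add_left ((j : ℕ) : ℤ)),
    (phase_eq_phase_iff _ _).2 (ht.mul_right ((j : ℕ) : ℤ))]

lemma Xpow_zero : Xpow d 0 = 1 := by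
  ext i j
  simp [Xpow_apply, residue_coe, Matrix.one_apply]

lemma GPM_zero_zero : GPM d 0 0 = 1 := by
  rw [GPM, Zpow_zero, Xpow_zero, mul_one]

lemma GPM_zero_left (t : ℤ) : GPM d 0 t = Zpow d t := by
  rw [GPM, Xpow_zero, one_mul]

lemma GPM_mem_unitaryGroup (s t : ℤ) : GPM d s t ∈ Matrix.unitaryGroup (Fin d) ℂ := by
  rw [Matrix.mem_unitaryGroup_iff']
  ext i j
  rw [mul_GPM_apply, Matrix.star_apply, GPM_apply, Matrix.one_apply]
  have h : residue d ((j : ℕ) + s) = residue d ((i : ℕ) + s) ↔ i = j := by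
    rw [residue_eq_iff]
    constructor
    · intro h
      have := (residue_eq_iff (d := d) _ _).2 (Int.ModEq.add_right_cancel' s h)
      rw [residue_coe, residue_coe] at this
      exact this.symm
    · rintro rfl
      rfl
  simp only [h]
  split_ifs with hij
  · subst hij
    rw [star_phase, ← phase_add, neg_add_cancel, phase_zero]
  · simp

end

section PhaseEquality

variable {n : Type*} {A B C A' B' : Matrix n n ℂ}

lemma phaseEq_refl (A : Matrix n n ℂ) : PhaseEq A A := ⟨1, by simp, by simp⟩

lemma phaseEq_trans (h : PhaseEq A B) (h' : PhaseEq B C) : PhaseEq A C := by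
  obtain ⟨c, hc, rfl⟩ := h
  obtain ⟨c', hc', rfl⟩ := h'
  exact ⟨c * c', by simp [hc, hc'], by rw [smul_smul]⟩

lemma phaseEq_symm (h : PhaseEq A B) : PhaseEq B A := by
  obtain ⟨c, hc, rfl⟩ := h
  have hc0 : c ≠ 0 := by
    rintro rfl
    simp at hc
  exact ⟨c⁻¹, by simp [hc], by rw [smul_smul, inv_mul_cancel₀ hc0, one_smul]⟩

variable [Fintype n]

lemma phaseEq_mul (h : PhaseEq A A') (h' : PhaseEq B B') : PhaseEq (A * B) (A' * B') := by
  obtain ⟨c, hc, rfl⟩ := h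
  obtain ⟨c', hc', rfl⟩ := h'
  exact ⟨c * c', by simp [hc, hc'], by rw [smul_mul_smul_comm]⟩

variable [DecidableEq n]

lemma phaseEq_pow (h : PhaseEq A B) (k : ℕ) : PhaseEq (A ^ k) (B ^ k) := by
  induction k with
  | zero => simpa using phaseEq_refl _
  | succ k ih =>
    rw [pow_succ, pow_succ]
    exact phaseEq_mul ih h

variable {W : Matrix n n ℂ}

lemma conj_mul (hW : W ∈ Matrix.unitaryGroup n ℂ) (A B : Matrix n n ℂ) :
    W * (A * B) * Wᴴ = (W * A * Wᴴ) * (W * B * Wᴴ) := by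
  have h : Wᴴ * W = 1 := Matrix.mem_unitaryGroup_iff'.1 hW
  calc W * (A * B) * Wᴴ = W * A * 1 * B * Wᴴ := by simp only [Matrix.mul_assoc, Matrix.one_mul]
    _ = _ := by rw [← h]; simp only [Matrix.mul_assoc]

lemma conj_pow (hW : W ∈ Matrix.unitaryGroup n ℂ) (A : Matrix n n ℂ) (k : ℕ) :
    W * A ^ k * Wᴴ = (W * A * Wᴴ) ^ k := by
  induction k with
  | zero =>
    rw [pow_zero, pow_zero, mul_one]
    exact Matrix.mem_unitaryGroup_iff.1 hW
  | succ k ih => rw [pow_succ, pow_succ, conj_mul hW, ih]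

end PhaseEquality

variable {d : ℕ} [NeZero d]

lemma phaseEq_GPM_mul (s t s' t' : ℤ) :
    PhaseEq (GPM d s t * GPM d s' t') (GPM d (s + s') (t + t')) :=
  ⟨_, norm_phase d _, GPM_mul s t s' t'⟩

lemma phaseEq_GPM_pow (s t : ℤ) (k : ℕ) :
    PhaseEq (GPM d s t ^ k) (GPM d (k * s) (k * t)) := by
  induction k with
  | zero => simpa [GPM_zero_zero] using phaseEq_refl _
  | succ k ih =>
    rw [pow_succ]
    have h := phaseEq_trans (phaseEq_mul ih (phaseEq_refl (GPM d s t)))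
      (phaseEq_GPM_mul (k * s) (k * t) s t)
    rwa [show (k : ℤ) * s + s = ((k + 1 : ℕ) : ℤ) * s by push_cast; ring,
      show (k : ℤ) * t + t = ((k + 1 : ℕ) : ℤ) * t by push_cast; ring] at h

lemma Xpow_pow (s : ℤ) (k : ℕ) : Xpow d s ^ k = Xpow d (k * s) := by
  induction k with
  | zero => simp [Xpow_zero]
  | succ k ih =>
    rw [pow_succ, ih, ← GPM_zero_right, ← GPM_zero_right, GPM_mul, ← GPM_zero_right, zero_mul,
      phase_zero, one_smul, add_zero]
    congr 1
    push_cast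
    ring

lemma Zpow_pow (t : ℤ) (k : ℕ) : Zpow d t ^ k = Zpow d (k * t) := by
  induction k with
  | zero => simp [Zpow_zero]
  | succ k ih =>
    rw [pow_succ, ih, ← GPM_zero_left, ← GPM_zero_left, GPM_mul, ← GPM_zero_left, mul_zero,
      phase_zero, one_smul, add_zero]
    congr 1
    push_cast
    ring

/-- A generalized Pauli matrix is scalar only if both exponents vanish modulo `d`. -/
lemma dvd_of_phaseEq_GPM_one (s t : ℤ) (h : PhaseEq (GPM d s t) 1) :
    (d : ℤ) ∣ s ∧ (d : ℤ) ∣ t := by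
  obtain ⟨c, hc, h⟩ := h
  have hc0 : c ≠ 0 := by
    rintro rfl
    simp at hc
  have hdiag : ∀ i : Fin d, GPM d s t i i = c := fun i => by simp [h]
  have hs : (d : ℤ) ∣ s := by
    have h0 := hdiag (residue d 0)
    rw [GPM_apply] at h0
    split_ifs at h0 with hi
    · rw [residue_eq_iff] at hi
      have h1 := (residue_modEq (d := d) 0).add_right s
      rw [zero_add] at h1
      exact Int.modEq_zero_iff_dvd.1 (hi.trans h1).symm
    · exact absurd h0.symm hc0
  refine ⟨hs, ?_⟩
  have hval : ∀ n : ℤ, phase d (t * n) = c := by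
    intro n
    have hn := hdiag (residue d n)
    rw [GPM_congr (Int.modEq_zero_iff_dvd.2 hs) (Int.ModEq.refl t), GPM_apply, add_zero,
      residue_coe, if_pos rfl, phase_mul_residue] at hn
    exact hn
  have h01 := (hval 1).trans (hval 0).symm
  rw [mul_one, mul_zero, phase_zero, phase_eq_one_iff] at h01
  exact h01

lemma exists_pow_smul_eq_one {n : Type*} [Fintype n] [DecidableEq n] {A : Matrix n n ℂ} {k : ℕ}
    (hk : k ≠ 0) (h : PhaseEq (A ^ k) 1) : ∃ γ : ℂ, ‖γ‖ = 1 ∧ (γ • A) ^ k = 1 := by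
  obtain ⟨c, hc, h⟩ := phaseEq_symm h
  obtain ⟨γ, hγ⟩ := IsAlgClosed.exists_pow_nat_eq c (Nat.pos_of_ne_zero hk)
  refine ⟨γ, ?_, ?_⟩
  · rw [← pow_eq_one_iff_of_nonneg (norm_nonneg γ) hk, ← norm_pow, hγ, hc]
  · rw [smul_pow, hγ, ← h]

lemma phaseEq_GPM_pow_one (s t : ℤ) : PhaseEq (GPM d s t ^ d) 1 := by
  have h := phaseEq_GPM_pow (d := d) s t d
  rwa [GPM_congr (Int.modEq_zero_iff_dvd.2 (dvd_mul_right _ _))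
    (Int.modEq_zero_iff_dvd.2 (dvd_mul_right _ _)), GPM_zero_zero] at h

open scoped ComplexOrder in
lemma exists_unit_eigenvector {n : Type*} [Fintype n] [DecidableEq n] [Nonempty n]
    (A : Matrix n n ℂ) : ∃ (μ : ℂ) (f : n → ℂ), star f ⬝ᵥ f = 1 ∧ A *ᵥ f = μ • f := by
  obtain ⟨μ, hμ⟩ := Module.End.exists_eigenvalue (Matrix.toLin' A)
  obtain ⟨g, hg⟩ := hμ.exists_hasEigenvector
  have hAg : A *ᵥ g = μ • g := by simpa using hg.apply_eq_smul
  have hpos : 0 < star g ⬝ᵥ g := Matrix.dotProduct_star_self_pos_iff.2 hg.2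
  obtain ⟨r, hr, hrg⟩ : ∃ r : ℝ, 0 < r ∧ (r : ℂ) = star g ⬝ᵥ g := by
    refine ⟨(star g ⬝ᵥ g).re, (Complex.pos_iff.1 hpos).1, ?_⟩
    apply Complex.ext
    · simp
    · simpa using (Complex.pos_iff.1 hpos).2
  have hs : ((√r : ℝ) : ℂ) * (√r : ℝ) = r := by
    exact_mod_cast Real.mul_self_sqrt hr.le
  have hs0 : ((√r : ℝ) : ℂ) ≠ 0 := by
    exact_mod_cast (Real.sqrt_pos.2 hr).ne'
  refine ⟨μ, ((√r : ℝ) : ℂ)⁻¹ • g, ?_, ?_⟩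
  · rw [star_smul, smul_dotProduct, dotProduct_smul, ← hrg, ← hs]
    simp only [smul_eq_mul, star_inv₀, Complex.star_def, Complex.conj_ofReal]
    field_simp
  · rw [Matrix.mulVec_smul, hAg, smul_comm]

/-- A pair of unitaries satisfying the Weyl relations, one of which has a fixed unit vector, is
unitarily equivalent to the standard pair of shift and clock matrices. -/
lemma exists_unitary_conj_of_weyl {P Q : Matrix (Fin d) (Fin d) ℂ} {f : Fin d → ℂ}
    (hP : P ∈ Matrix.unitaryGroup (Fin d) ℂ) (hQ : Q ∈ Matrix.unitaryGroup (Fin d) ℂ)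
    (hPd : P ^ d = 1) (hQP : Q * P = phase d 1 • (P * Q)) (hf : star f ⬝ᵥ f = 1)
    (hQf : Q *ᵥ f = f) :
    ∃ W ∈ Matrix.unitaryGroup (Fin d) ℂ, W * Xpow d 1 * Wᴴ = P ∧ W * Zpow d 1 * Wᴴ = Q := by
  have hQpow : ∀ k : ℕ, Q *ᵥ (P ^ k *ᵥ f) = phase d k • (P ^ k *ᵥ f) := by
    intro k
    induction k with
    | zero => simp [phase_zero, hQf]
    | succ k ih =>
      rw [pow_succ', ← Matrix.mulVec_mulVec, Matrix.mulVec_mulVec, hQP, Matrix.smul_mulVec,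
        ← Matrix.mulVec_mulVec, ih, Matrix.mulVec_smul, smul_smul, ← phase_add]
      congr 2
      push_cast
      ring
  have hmod : ∀ k : ℕ, P ^ (k % d) = P ^ k := by
    intro k
    conv_rhs => rw [← Nat.mod_add_div k d, pow_add, pow_mul, hPd, one_pow, mul_one]
  have hres : ∀ k : ℕ, P ^ ((residue d (k : ℤ) : Fin d) : ℕ) = P ^ k := by
    intro k
    rw [← hmod k]
    congr 1
  let W : Matrix (Fin d) (Fin d) ℂ := Matrix.of fun i j => (P ^ (j : ℕ) *ᵥ f) i
  have hcol : ∀ (M : Matrix (Fin d) (Fin d) ℂ) (i j : Fin d),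
      (M * W) i j = (M *ᵥ (P ^ (j : ℕ) *ᵥ f)) i := fun M i j => rfl
  have hWX : W * Xpow d 1 = P * W := by
    ext i j
    have h := hres (j + 1)
    push_cast at h
    rw [mul_Xpow_apply, hcol, Matrix.mulVec_mulVec, ← pow_succ', ← h]
    rfl
  have hWZ : W * Zpow d 1 = Q * W := by
    ext i j
    rw [mul_Zpow_apply, hcol, hQpow, one_mul, mul_comm]
    rfl
  have hunit : ∀ {M : Matrix (Fin d) (Fin d) ℂ}, M ∈ Matrix.unitaryGroup (Fin d) ℂ →
      ∀ x y : Fin d → ℂ, star (M *ᵥ x) ⬝ᵥ (M *ᵥ y) = star x ⬝ᵥ y := by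
    intro M hM x y
    have hM' : Mᴴ * M = 1 := Matrix.mem_unitaryGroup_iff'.1 hM
    rw [Matrix.star_mulVec, Matrix.dotProduct_mulVec, Matrix.vecMul_vecMul, hM',
      Matrix.vecMul_one]
  have hW : W ∈ Matrix.unitaryGroup (Fin d) ℂ := by
    rw [Matrix.mem_unitaryGroup_iff']
    ext i j
    have hij : (star W * W) i j = star (P ^ (i : ℕ) *ᵥ f) ⬝ᵥ (P ^ (j : ℕ) *ᵥ f) := rfl
    rw [hij, Matrix.one_apply]
    split_ifs with h
    · rw [h, hunit (pow_mem hP _), hf]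
    · have hq := hunit hQ (P ^ (i : ℕ) *ᵥ f) (P ^ (j : ℕ) *ᵥ f)
      rw [hQpow, hQpow, star_smul, smul_dotProduct, dotProduct_smul, smul_smul, star_phase,
        ← phase_add, smul_eq_mul] at hq
      by_contra h0
      rw [mul_eq_right₀ h0, phase_eq_one_iff, neg_add_eq_sub, ← Int.modEq_iff_dvd,
        ← residue_eq_iff, residue_coe, residue_coe] at hq
      exact h hq
  have hWW : W * Wᴴ = 1 := Matrix.mem_unitaryGroup_iff.1 hW
  refine ⟨W, hW, ?_, ?_⟩
  · rw [hWX, Matrix.mul_assoc, hWW, mul_one]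
  · rw [hWZ, Matrix.mul_assoc, hWW, mul_one]

lemma smul_mem_unitaryGroup {n : Type*} [Fintype n] [DecidableEq n] {A : Matrix n n ℂ}
    (hA : A ∈ Matrix.unitaryGroup n ℂ) {c : ℂ} (hc : ‖c‖ = 1) :
    c • A ∈ Matrix.unitaryGroup n ℂ := by
  rw [Matrix.mem_unitaryGroup_iff] at *
  have h : c * star c = 1 := by
    have := Complex.mul_conj' c
    simpa [hc] using this
  rw [star_smul, smul_mul_smul_comm, hA, h, one_smul]

lemma GPM_comm (s t s' t' : ℤ) :
    GPM d s' t' * GPM d s t = phase d (s * t' - s' * t) • (GPM d s t * GPM d s' t') := by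
  rw [GPM_mul, GPM_mul, smul_smul, ← phase_add, add_comm s', add_comm t']
  congr 2
  ring

/-- Every matrix in `SL₂(ℤ/d)` is implemented by a (Clifford) unitary. -/
lemma exists_clifford (p q r s : ℤ) (h : p * s - r * q ≡ 1 [ZMOD d]) :
    ∃ W ∈ Matrix.unitaryGroup (Fin d) ℂ,
      PhaseEq (W * Xpow d 1 * Wᴴ) (GPM d p q) ∧ PhaseEq (W * Zpow d 1 * Wᴴ) (GPM d r s) := by
  obtain ⟨γ, hγ, hγd⟩ := exists_pow_smul_eq_one (NeZero.ne d) (phaseEq_GPM_pow_one (d := d) p q)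
  obtain ⟨μ, f, hf, hμ⟩ := exists_unit_eigenvector (GPM d r s)
  obtain ⟨δ, hδ, hδd⟩ := exists_pow_smul_eq_one (NeZero.ne d) (phaseEq_GPM_pow_one (d := d) r s)
  have hμd : (δ * μ) ^ d = 1 := by
    have hpow : ∀ k : ℕ, (δ • GPM d r s) ^ k *ᵥ f = (δ * μ) ^ k • f := by
      intro k
      induction k with
      | zero => simp
      | succ k ih =>
        rw [pow_succ', ← Matrix.mulVec_mulVec, ih, Matrix.mulVec_smul, Matrix.smul_mulVec, hμ,
          smul_smul, smul_smul, pow_succ, mul_assoc]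
    have hd := congrArg (star f ⬝ᵥ ·) (hpow d)
    simp only [hδd, Matrix.one_mulVec, dotProduct_smul, hf, smul_eq_mul, mul_one] at hd
    exact hd.symm
  have hμ1 : ‖μ‖ = 1 := by
    have := Complex.norm_eq_one_of_pow_eq_one hμd (NeZero.ne d)
    rwa [norm_mul, hδ, one_mul] at this
  have hμ0 : μ ≠ 0 := by
    rintro rfl
    simp at hμ1
  have hμi : ‖μ⁻¹‖ = 1 := by rw [norm_inv, hμ1, inv_one]
  obtain ⟨W, hW, hX, hZ⟩ := exists_unitary_conj_of_weyl
    (smul_mem_unitaryGroup (GPM_mem_unitaryGroup p q) hγ)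
    (smul_mem_unitaryGroup (GPM_mem_unitaryGroup r s) hμi) hγd
    (by rw [smul_mul_smul_comm, smul_mul_smul_comm, GPM_comm, (phase_eq_phase_iff _ _).2 h,
          smul_comm, mul_comm μ⁻¹]) hf
    (by rw [Matrix.smul_mulVec, hμ, smul_smul, inv_mul_cancel₀ hμ0, one_smul])
  exact ⟨W, hW, ⟨γ, hγ, hX⟩, ⟨μ⁻¹, hμi, hZ⟩⟩

/-- A permutation unitary fixing `X^a` and sending `Z^b` to `Z^{vb}`. -/
lemma exists_unitary_scaling {a b : ℕ} (ha : a ∣ d) {v w : ℤ} (hvw : v * w ≡ 1 [ZMOD d])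
    (hv : v * a * b ≡ a * b [ZMOD d]) :
    ∃ W ∈ Matrix.unitaryGroup (Fin d) ℂ,
      W * Xpow d a * Wᴴ = Xpow d a ∧ W * Zpow d b * Wᴴ = Zpow d (v * b) := by
  have had : (a : ℤ) ∣ d := Int.natCast_dvd_natCast.2 ha
  let τ : ℤ → ℤ := fun n => n + (w - 1) * (n % a)
  let σ : Fin d → Fin d := fun j => residue d (τ (j : ℕ))
  have hτ_add : ∀ n : ℤ, τ (n + a) = τ n + a := by
    intro n
    simp only [τ, Int.add_emod_right]
    ring
  have hτ_congr : ∀ {m n : ℤ}, m ≡ n [ZMOD d] → τ m ≡ τ n [ZMOD d] := by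
    intro m n h
    have h' : m % a = n % a := h.of_dvd had
    simp only [τ, h']
    exact h.add_right _
  have hτ_inj : ∀ {m n : ℤ}, τ m ≡ τ n [ZMOD d] → m ≡ n [ZMOD d] := by
    intro m n h
    have hw : ∀ k : ℤ, v * τ k ≡ k [ZMOD a] := by
      intro k
      have h1 : τ k ≡ k + (w - 1) * k [ZMOD a] :=
        ((Int.mod_modEq k a).mul_left (w - 1)).add_left k
      have h2 := (hvw.of_dvd had).mul_right k
      have h3 := h1.mul_left v
      rw [show v * (k + (w - 1) * k) = v * w * k by ring] at h3
      simpa using h3.trans h2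
    have h' : m % a = n % a := (hw m).symm.trans (((h.of_dvd had).mul_left v).trans (hw n))
    simp only [τ, h'] at h
    exact Int.ModEq.add_right_cancel' _ h
  have hτ_mul : ∀ n : ℤ, v * b * τ n ≡ b * n [ZMOD d] := by
    intro n
    have hn : n = n % a + a * (n / a) := (Int.emod_add_mul_ediv n a).symm
    have h1 := (hvw.mul_right (b * (n % a))).add (hv.mul_right (n / a))
    convert h1 using 1
    · simp only [τ]
      conv_lhs => rw [hn]
      simp
      ring
    · conv_lhs => rw [hn]
      ring
  have hσ_inj : Function.Injective σ := by
    intro i j h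
    have := (residue_eq_iff _ _).2 (hτ_inj ((residue_eq_iff _ _).1 h))
    rwa [residue_coe, residue_coe] at this
  let W : Matrix (Fin d) (Fin d) ℂ := Matrix.of fun i j => if i = σ j then 1 else 0
  have hW : W ∈ Matrix.unitaryGroup (Fin d) ℂ := by
    rw [Matrix.mem_unitaryGroup_iff']
    ext i j
    simp [W, Matrix.mul_apply, Matrix.one_apply, hσ_inj.eq_iff, eq_comm]
  have hWW : W * Wᴴ = 1 := Matrix.mem_unitaryGroup_iff.1 hW
  refine ⟨W, hW, ?_, ?_⟩
  · suffices h : W * Xpow d a = Xpow d a * W by rw [h, Matrix.mul_assoc, hWW, mul_one]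
    ext i j
    have hσ : σ (residue d ((j : ℕ) + a)) = residue d ((σ j : ℕ) + a) := by
      rw [residue_eq_iff]
      refine (hτ_congr (residue_modEq _)).trans ?_
      rw [hτ_add]
      exact ((residue_modEq _).add_right _).symm
    rw [mul_Xpow_apply]
    simp [W, Matrix.mul_apply, Xpow_apply, hσ]
  · suffices h : W * Zpow d b = Zpow d (v * b) * W by rw [h, Matrix.mul_assoc, hWW, mul_one]
    ext i j
    rw [mul_Zpow_apply, Zpow_eq, Matrix.diagonal_mul]
    by_cases h : i = σ j
    · have hp : phase d (v * b * (σ j : ℕ)) = phase d (b * (j : ℕ)) := by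
        rw [phase_mul_residue, phase_eq_phase_iff]
        exact hτ_mul _
      simp [W, h, hp]
    · simp [W, h]

end GeneralizedPauli

section NumberTheory

lemma Int.gcd_gcd_eq_one_iff (x y z : ℤ) :
    Int.gcd x (Int.gcd y z : ℤ) = 1 ↔
      ∀ p : ℕ, p.Prime → (p : ℤ) ∣ x → (p : ℤ) ∣ y → ¬ (p : ℤ) ∣ z := by
  constructor
  · intro h p hp hx hy hz
    have := Int.dvd_gcd hx (Int.dvd_coe_gcd hy hz)
    rw [h] at this
    exact hp.one_lt.ne' (Nat.dvd_one.1 this)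
  · intro h
    by_contra hne
    obtain ⟨p, hp, hdvd⟩ := Nat.exists_prime_and_dvd hne
    have hdvd' := Int.natCast_dvd_natCast.2 hdvd
    have hyz := hdvd'.trans (Int.gcd_dvd_right x (Int.gcd y z : ℤ))
    exact h p hp (hdvd'.trans (Int.gcd_dvd_left x (Int.gcd y z : ℤ)))
      (hyz.trans (Int.gcd_dvd_left y z)) (hyz.trans (Int.gcd_dvd_right y z))

lemma Int.exists_forall_prime_modEq (S : Finset ℕ) (hS : ∀ p ∈ S, p.Prime) (r : ℕ → ℤ) :
    ∃ x : ℤ, ∀ p ∈ S, x ≡ r p [ZMOD p] := by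
  obtain ⟨x, hx⟩ := Nat.chineseRemainderOfFinset (fun p => (r p % p).toNat) id S
    (fun p hp => (hS p hp).ne_zero)
    (fun p hp q hq hpq => (Nat.coprime_primes (hS p hp) (hS q hq)).2 hpq)
  refine ⟨x, fun p hp => ?_⟩
  have h := Int.natCast_modEq_iff.2 (hx p hp)
  rw [Int.toNat_of_nonneg
    (Int.emod_nonneg _ (Nat.cast_ne_zero.mpr (hS p hp).ne_zero))] at h
  exact h.trans (Int.mod_modEq _ _)

lemma Int.exists_add_mul_modEq {p : ℕ} (hp : p.Prime) {A : ℤ} (hA : ¬ (p : ℤ) ∣ A) (u t : ℤ) :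
    ∃ x : ℤ, u + A * x ≡ t [ZMOD p] := by
  obtain ⟨r, s, hrs⟩ := ((Nat.prime_iff_prime_int.1 hp).coprime_iff_not_dvd).2 hA
  refine ⟨s * (t - u), ?_⟩
  rw [Int.modEq_iff_dvd]
  exact ⟨r * (t - u), by linear_combination (u - t) * hrs⟩

lemma exists_det_not_dvd {p : ℕ} (hp : p.Prime) (A B u₁ v₁ u₂ v₂ : ℤ)
    (hA : (p : ℤ) ∣ u₁ → (p : ℤ) ∣ v₁ → ¬ (p : ℤ) ∣ A)
    (hB : (p : ℤ) ∣ u₂ → (p : ℤ) ∣ v₂ → ¬ (p : ℤ) ∣ B)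
    (hAB : (p : ℤ) ∣ u₁ * v₂ - u₂ * v₁ → (p : ℤ) ∣ A → ¬ (p : ℤ) ∣ B) :
    ∃ x₁ y₁ x₂ y₂ : ℤ,
      ¬ (p : ℤ) ∣ (u₁ + A * x₁) * (v₂ + B * y₂) - (u₂ + B * x₂) * (v₁ + A * y₁) := by
  have hp1 : ¬ (p : ℤ) ∣ 1 := (Nat.prime_iff_prime_int.1 hp).not_dvd_one
  have key : ∀ s₁ t₁ s₂ t₂ : ℤ, (∃ x, u₁ + A * x ≡ s₁ [ZMOD p]) →
      (∃ x, v₁ + A * x ≡ t₁ [ZMOD p]) → (∃ x, u₂ + B * x ≡ s₂ [ZMOD p]) →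
      (∃ x, v₂ + B * x ≡ t₂ [ZMOD p]) → ¬ (p : ℤ) ∣ s₁ * t₂ - s₂ * t₁ →
      ∃ x₁ y₁ x₂ y₂ : ℤ,
        ¬ (p : ℤ) ∣ (u₁ + A * x₁) * (v₂ + B * y₂) - (u₂ + B * x₂) * (v₁ + A * y₁) := by
    rintro s₁ t₁ s₂ t₂ ⟨x₁, h₁⟩ ⟨y₁, h₂⟩ ⟨x₂, h₃⟩ ⟨y₂, h₄⟩ h
    refine ⟨x₁, y₁, x₂, y₂, fun hdvd => h ?_⟩
    exact ((h₁.mul h₄).sub (h₃.mul h₂)).dvd_iff.1 hdvd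
  have stay : ∀ u C : ℤ, ∃ x, u + C * x ≡ u [ZMOD p] := fun u C => ⟨0, by simp⟩
  by_cases hpA : (p : ℤ) ∣ A
  · by_cases hpB : (p : ℤ) ∣ B
    · exact key u₁ v₁ u₂ v₂ (stay _ _) (stay _ _) (stay _ _) (stay _ _)
        fun h => hAB h hpA hpB
    · have hit := Int.exists_add_mul_modEq hp hpB
      by_cases hu : (p : ℤ) ∣ u₁
      · exact key u₁ v₁ (-1) 0 (stay _ _) (stay _ _) (hit _ _) (hit _ _)
          fun h => hA hu (by simpa using h) hpA
      · exact key u₁ v₁ 0 1 (stay _ _) (stay _ _) (hit _ _) (hit _ _) (by simpa using hu)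
  · have hit := Int.exists_add_mul_modEq hp hpA
    by_cases hpB : (p : ℤ) ∣ B
    · by_cases hu : (p : ℤ) ∣ u₂
      · exact key 1 0 u₂ v₂ (hit _ _) (hit _ _) (stay _ _) (stay _ _)
          fun h => hB hu (by simpa using h) hpB
      · exact key 0 1 u₂ v₂ (hit _ _) (hit _ _) (stay _ _) (stay _ _) (by simpa using hu)
    · have hit' := Int.exists_add_mul_modEq hp hpB
      exact key 1 0 0 1 (hit _ _) (hit _ _) (hit' _ _) (hit' _ _) (by simpa using hp1)

/-- The columns of a `2 × 2` integer matrix can be modified modulo `A` and modulo `B` so that its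
determinant becomes a unit modulo `d`, provided there is no obstruction at any prime. -/
lemma exists_det_isCoprime {d : ℕ} (hd : d ≠ 0) (A B u₁ v₁ u₂ v₂ : ℤ)
    (hA : Int.gcd u₁ (Int.gcd v₁ A : ℤ) = 1) (hB : Int.gcd u₂ (Int.gcd v₂ B : ℤ) = 1)
    (hAB : Int.gcd (u₁ * v₂ - u₂ * v₁) (Int.gcd A B : ℤ) = 1) :
    ∃ x₁ y₁ x₂ y₂ : ℤ,
      IsCoprime ((u₁ + A * x₁) * (v₂ + B * y₂) - (u₂ + B * x₂) * (v₁ + A * y₁)) (d : ℤ) := by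
  rw [Int.gcd_gcd_eq_one_iff] at hA hB hAB
  have hloc : ∀ p : ℕ, ∃ x₁ y₁ x₂ y₂ : ℤ, p.Prime →
      ¬ (p : ℤ) ∣ (u₁ + A * x₁) * (v₂ + B * y₂) - (u₂ + B * x₂) * (v₁ + A * y₁) := by
    intro p
    by_cases hp : p.Prime
    · obtain ⟨x₁, y₁, x₂, y₂, h⟩ :=
        exists_det_not_dvd hp A B u₁ v₁ u₂ v₂ (hA p hp) (hB p hp) (hAB p hp)
      exact ⟨x₁, y₁, x₂, y₂, fun _ => h⟩
    · exact ⟨0, 0, 0, 0, fun h => absurd h hp⟩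
  choose r₁ s₁ r₂ s₂ hrs using hloc
  have crt := Int.exists_forall_prime_modEq d.primeFactors
    fun p hp => Nat.prime_of_mem_primeFactors hp
  obtain ⟨x₁, hx₁⟩ := crt r₁
  obtain ⟨y₁, hy₁⟩ := crt s₁
  obtain ⟨x₂, hx₂⟩ := crt r₂
  obtain ⟨y₂, hy₂⟩ := crt s₂
  refine ⟨x₁, y₁, x₂, y₂, ?_⟩
  rw [Int.isCoprime_iff_gcd_eq_one]
  by_contra hne
  obtain ⟨p, hp, hdvd⟩ := Nat.exists_prime_and_dvd hne
  have hdvd' := Int.natCast_dvd_natCast.2 hdvd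
  have hmem : p ∈ d.primeFactors := Nat.mem_primeFactors.2
    ⟨hp, Int.natCast_dvd_natCast.1 (hdvd'.trans (Int.gcd_dvd_right _ _)), hd⟩
  refine hrs p hp ((Int.ModEq.dvd_iff ?_).1 (hdvd'.trans (Int.gcd_dvd_left _ _)))
  exact ((((hx₁ p hmem).mul_left A).add_left u₁).mul (((hy₂ p hmem).mul_left B).add_left v₂)).sub
    ((((hx₂ p hmem).mul_left B).add_left u₂).mul (((hy₁ p hmem).mul_left A).add_left v₁))

end NumberTheory

namespace GeneralizedPauli

variable {d : ℕ} [NeZero d]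

lemma exists_unitary_of_conditions {a b A B : ℕ} (hA : (a : ℤ) * A = d) (hB : (b : ℤ) * B = d)
    {u₁ v₁ u₂ v₂ : ℤ} (h₁ : Int.gcd u₁ (Int.gcd v₁ A : ℤ) = 1)
    (h₂ : Int.gcd u₂ (Int.gcd v₂ B : ℤ) = 1)
    (hdet : (u₁ * v₂ - u₂ * v₁) * a * b ≡ (a : ℤ) * b [ZMOD (d : ℤ)])
    (h₃ : Int.gcd (u₁ * v₂ - u₂ * v₁) (Int.gcd A B : ℤ) = 1) :
    ∃ W ∈ Matrix.unitaryGroup (Fin d) ℂ,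
      PhaseEq (W * Xpow d a * Wᴴ) (GPM d (u₁ * a) (v₁ * a)) ∧
      PhaseEq (W * Zpow d b * Wᴴ) (GPM d (u₂ * b) (v₂ * b)) := by
  obtain ⟨x₁, y₁, x₂, y₂, hcop⟩ :=
    exists_det_isCoprime (NeZero.ne d) A B u₁ v₁ u₂ v₂ h₁ h₂ h₃
  have shiftA : ∀ u x : ℤ, (u + A * x) * a ≡ u * a [ZMOD d] := fun u x =>
    Int.modEq_iff_dvd.2 ⟨-x, by rw [← hA]; ring⟩
  have shiftB : ∀ u x : ℤ, (u + B * x) * b ≡ u * b [ZMOD d] := fun u x =>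
    Int.modEq_iff_dvd.2 ⟨-x, by rw [← hB]; ring⟩
  have hu₁ := shiftA u₁ x₁
  have hv₁ := shiftA v₁ y₁
  have hu₂ := shiftB u₂ x₂
  have hv₂ := shiftB v₂ y₂
  generalize u₁ + A * x₁ = p at *
  generalize v₁ + A * y₁ = q at *
  generalize u₂ + B * x₂ = r at *
  generalize v₂ + B * y₂ = s at *
  obtain ⟨w, k, hw⟩ := hcop
  have hvw : (p * s - r * q) * w ≡ 1 [ZMOD d] :=
    Int.modEq_iff_dvd.2 ⟨k, by linear_combination -hw⟩
  have hv : (p * s - r * q) * a * b ≡ a * b [ZMOD d] := by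
    refine Int.ModEq.trans ?_ hdet
    convert (hu₁.mul hv₂).sub (hu₂.mul hv₁) using 1 <;> ring
  have had : a ∣ d := ⟨A, by exact_mod_cast hA.symm⟩
  obtain ⟨W₀, hW₀, hX₀, hZ₀⟩ := exists_unitary_scaling had hvw hv
  obtain ⟨W₁, hW₁, hX₁, hZ₁⟩ := exists_clifford (d := d) p q (w * r) (w * s)
    (by convert hvw using 1; ring)
  have hconj : ∀ M : Matrix (Fin d) (Fin d) ℂ,
      W₁ * W₀ * M * (W₁ * W₀)ᴴ = W₁ * (W₀ * M * W₀ᴴ) * W₁ᴴ := by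
    intro M
    rw [Matrix.conjTranspose_mul]
    simp only [Matrix.mul_assoc]
  refine ⟨W₁ * W₀, mul_mem hW₁ hW₀, ?_, ?_⟩
  · have hXa : Xpow d a = Xpow d 1 ^ a := by rw [Xpow_pow, mul_one]
    rw [hconj, hX₀, hXa, conj_pow hW₁]
    refine phaseEq_trans (phaseEq_pow hX₁ a) (phaseEq_trans (phaseEq_GPM_pow p q a) ?_)
    rw [mul_comm (a : ℤ), mul_comm (a : ℤ), GPM_congr hu₁ hv₁]
    exact phaseEq_refl _
  · obtain ⟨m, hm⟩ : ∃ m : ℕ, (m : ℤ) ≡ (p * s - r * q) * b [ZMOD d] :=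
      ⟨_, residue_modEq _⟩
    have hZm : Zpow d ((p * s - r * q) * b) = Zpow d 1 ^ m := by
      rw [Zpow_pow, mul_one, ← GPM_zero_left, ← GPM_zero_left]
      exact GPM_congr (Int.ModEq.refl 0) hm.symm
    have hmw : ∀ t t' : ℤ, t * b ≡ t' * b [ZMOD d] → m * (w * t) ≡ t' * b [ZMOD d] := by
      intro t t' ht
      refine Int.ModEq.trans ?_ ht
      have h1 := hm.mul_right (w * t)
      have h2 := hvw.mul_right (t * b)
      rw [one_mul] at h2
      refine h1.trans (Int.ModEq.trans ?_ h2)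
      rw [show (p * s - r * q) * b * (w * t) = (p * s - r * q) * w * (t * b) by ring]
    rw [hconj, hZ₀, hZm, conj_pow hW₁]
    refine phaseEq_trans (phaseEq_pow hZ₁ m) (phaseEq_trans (phaseEq_GPM_pow _ _ m) ?_)
    rw [GPM_congr (hmw r u₂ hu₂) (hmw s v₂ hv₂)]
    exact phaseEq_refl _

section Necessity

variable {a b : ℕ} {u₁ v₁ u₂ v₂ : ℤ} {W : Matrix (Fin d) (Fin d) ℂ}

lemma det_modEq_of_unitary (hW : W ∈ Matrix.unitaryGroup (Fin d) ℂ)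
    (hX : PhaseEq (W * Xpow d a * Wᴴ) (GPM d (u₁ * a) (v₁ * a)))
    (hZ : PhaseEq (W * Zpow d b * Wᴴ) (GPM d (u₂ * b) (v₂ * b))) :
    (u₁ * v₂ - u₂ * v₁) * a * b ≡ (a : ℤ) * b [ZMOD (d : ℤ)] := by
  obtain ⟨c, hc, hX⟩ := hX
  obtain ⟨c', hc', hZ⟩ := hZ
  have hcomm := GPM_comm (d := d) a 0 0 b
  rw [GPM_zero_left, GPM_zero_right] at hcomm
  have hconj := congrArg (fun M => W * M * Wᴴ) hcomm
  simp only [Matrix.mul_smul, Matrix.smul_mul, conj_mul hW, hX, hZ] at hconj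
  rw [GPM_comm] at hconj
  have hu : GPM d (u₁ * a) (v₁ * a) * GPM d (u₂ * b) (v₂ * b) ≠ 0 := by
    intro h0
    have := Matrix.mem_unitaryGroup_iff.1
      (mul_mem (GPM_mem_unitaryGroup (d := d) (u₁ * a) (v₁ * a))
        (GPM_mem_unitaryGroup (u₂ * b) (v₂ * b)))
    rw [h0, zero_mul] at this
    exact zero_ne_one this
  have hc0 : c ≠ 0 := by
    rintro rfl
    simp at hc
  have hc0' : c' ≠ 0 := by
    rintro rfl
    simp at hc'
  simp only [smul_smul] at hconj
  have h := smul_left_injective ℂ hu hconj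
  have h' : phase d (u₁ * a * (v₂ * b) - u₂ * b * (v₁ * a)) = phase d (a * b - 0 * 0) := by
    apply mul_left_cancel₀ (mul_ne_zero hc0 hc0')
    linear_combination h
  rw [phase_eq_phase_iff] at h'
  convert h' using 1 <;> ring

lemma injective_of_unitary (hW : W ∈ Matrix.unitaryGroup (Fin d) ℂ)
    (hX : PhaseEq (W * Xpow d a * Wᴴ) (GPM d (u₁ * a) (v₁ * a)))
    (hZ : PhaseEq (W * Zpow d b * Wᴴ) (GPM d (u₂ * b) (v₂ * b))) (m n : ℕ)
    (hu : (d : ℤ) ∣ m * (u₁ * a) + n * (u₂ * b)) (hv : (d : ℤ) ∣ m * (v₁ * a) + n * (v₂ * b)) :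
    (d : ℤ) ∣ m * a ∧ (d : ℤ) ∣ n * b := by
  apply dvd_of_phaseEq_GPM_one
  have h : PhaseEq (W * GPM d (m * a) (n * b) * Wᴴ) 1 := by
    rw [GPM, ← Xpow_pow, ← Zpow_pow, conj_mul hW, conj_pow hW, conj_pow hW]
    have h1 := phaseEq_mul (phaseEq_trans (phaseEq_pow hX m) (phaseEq_GPM_pow _ _ m))
      (phaseEq_trans (phaseEq_pow hZ n) (phaseEq_GPM_pow _ _ n))
    have h2 := phaseEq_trans h1 (phaseEq_GPM_mul _ _ _ _)
    rwa [GPM_congr (Int.modEq_zero_iff_dvd.2 hu) (Int.modEq_zero_iff_dvd.2 hv),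
      GPM_zero_zero] at h2
  obtain ⟨c, hc, h⟩ := h
  refine ⟨c, hc, ?_⟩
  have hWW : Wᴴ * W = 1 := Matrix.mem_unitaryGroup_iff'.1 hW
  calc GPM d (m * a) (n * b)
      = (Wᴴ * W) * GPM d (m * a) (n * b) * (Wᴴ * W) := by rw [hWW, one_mul, mul_one]
    _ = Wᴴ * (W * GPM d (m * a) (n * b) * Wᴴ) * W := by simp only [Matrix.mul_assoc]
    _ = c • 1 := by rw [h, Matrix.mul_smul, Matrix.smul_mul, mul_one, hWW]

lemma conditions_of_unitary {A B : ℕ} (hA : (a : ℤ) * A = d) (hB : (b : ℤ) * B = d)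
    (hu₁ : 0 ≤ u₁) (hv₁ : 0 ≤ v₁) (hu₂ : 0 ≤ u₂) (hv₂ : 0 ≤ v₂)
    (hW : W ∈ Matrix.unitaryGroup (Fin d) ℂ)
    (hX : PhaseEq (W * Xpow d a * Wᴴ) (GPM d (u₁ * a) (v₁ * a)))
    (hZ : PhaseEq (W * Zpow d b * Wᴴ) (GPM d (u₂ * b) (v₂ * b))) :
    Int.gcd u₁ (Int.gcd v₁ A : ℤ) = 1 ∧ Int.gcd u₂ (Int.gcd v₂ B : ℤ) = 1 ∧
      (u₁ * v₂ - u₂ * v₁) * a * b ≡ (a : ℤ) * b [ZMOD (d : ℤ)] ∧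
      Int.gcd (u₁ * v₂ - u₂ * v₁) (Int.gcd A B : ℤ) = 1 := by
  have hd0 : (d : ℤ) ≠ 0 := Nat.cast_ne_zero.mpr (NeZero.ne d)
  have hinj := injective_of_unitary hW hX hZ
  have hcancel : ∀ {p c : ℤ} (C m e : ℤ), e * (p * C) = d → c = m * C * e → (d : ℤ) ∣ c →
      p ∣ m := by
    rintro p c C m e he rfl ⟨k, hk⟩
    refine ⟨k, ?_⟩
    have hCe : C * e ≠ 0 := by
      intro h0
      apply hd0
      rw [← he]
      linear_combination p * h0
    apply mul_right_cancel₀ hCe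
    linear_combination hk - k * he
  have h₁ : ∀ p : ℕ, p.Prime → (p : ℤ) ∣ u₁ → (p : ℤ) ∣ v₁ → ¬ (p : ℤ) ∣ (A : ℤ) := by
    rintro p hp ⟨u, rfl⟩ ⟨v, rfl⟩ hpA
    obtain ⟨C, rfl⟩ := Int.natCast_dvd_natCast.1 hpA
    push_cast at hA
    have h := (hinj C 0 ⟨u, by rw [← hA]; push_cast; ring⟩ ⟨v, by rw [← hA]; push_cast; ring⟩).1
    have := hcancel (p := p) C 1 a hA (by ring) h
    exact (Nat.prime_iff_prime_int.1 hp).not_dvd_one this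
  have h₂ : ∀ p : ℕ, p.Prime → (p : ℤ) ∣ u₂ → (p : ℤ) ∣ v₂ → ¬ (p : ℤ) ∣ (B : ℤ) := by
    rintro p hp ⟨u, rfl⟩ ⟨v, rfl⟩ hpB
    obtain ⟨C, rfl⟩ := Int.natCast_dvd_natCast.1 hpB
    push_cast at hB
    have h := (hinj 0 C ⟨u, by rw [← hB]; push_cast; ring⟩ ⟨v, by rw [← hB]; push_cast; ring⟩).2
    have := hcancel (p := p) C 1 b hB (by ring) h
    exact (Nat.prime_iff_prime_int.1 hp).not_dvd_one this
  refine ⟨(Int.gcd_gcd_eq_one_iff _ _ _).2 h₁, (Int.gcd_gcd_eq_one_iff _ _ _).2 h₂,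
    det_modEq_of_unitary hW hX hZ, (Int.gcd_gcd_eq_one_iff _ _ _).2 ?_⟩
  rintro p hp ⟨e, he⟩ hpA hpB
  obtain ⟨C, rfl⟩ := Int.natCast_dvd_natCast.1 hpA
  obtain ⟨D, rfl⟩ := Int.natCast_dvd_natCast.1 hpB
  lift u₁ to ℕ using hu₁
  lift v₁ to ℕ using hv₁
  lift u₂ to ℕ using hu₂
  lift v₂ to ℕ using hv₂
  obtain ⟨k, rfl⟩ : ∃ k, p = k + 1 := ⟨p - 1, by have := hp.pos; omega⟩
  push_cast at hA hB he
  have hk : ∀ t : ℤ, ((k + 1 : ℕ) : ℤ) ∣ k * t → ((k + 1 : ℕ) : ℤ) ∣ t := by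
    rintro t ⟨c, hc⟩
    refine ⟨t - c, ?_⟩
    push_cast at hc ⊢
    linear_combination -hc
  have hg : (b : ℤ) * D = a * C := by
    have hk0 : (k + 1 : ℤ) ≠ 0 := by positivity
    apply mul_left_cancel₀ hk0
    linear_combination hB - hA
  refine h₁ _ hp ?_ ?_ hpA
  · have h := (hinj (u₂ * C) (k * u₁ * D)
      ⟨u₁ * u₂, by push_cast; linear_combination (u₁ : ℤ) * u₂ * hA + k * u₁ * u₂ * hg⟩
      ⟨u₁ * v₂ - e, by
        push_cast
        linear_combination (u₁ * v₂ - e : ℤ) * hA + k * u₁ * v₂ * hg - a * C * he⟩).2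
    exact hk _ (hcancel D _ b (by push_cast; exact hB) (by push_cast; ring) h)
  · have h := (hinj (v₂ * C) (k * v₁ * D)
      ⟨e + v₁ * u₂, by
        push_cast
        linear_combination (e + v₁ * u₂ : ℤ) * hA + k * v₁ * u₂ * hg + a * C * he⟩
      ⟨v₁ * v₂, by push_cast; linear_combination (v₁ : ℤ) * v₂ * hA + k * v₁ * v₂ * hg⟩).2
    exact hk _ (hcancel D _ b (by push_cast; exact hB) (by push_cast; ring) h)

end Necessity

end GeneralizedPauli

/-- **Theorem 3.1.** Let `a, b` be positive divisors of `d` (`a, b < d`) and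
`0 ≤ u₁, v₁ < d/a`, `0 ≤ u₂, v₂ < d/b`. There exists a unitary `W` with
`W X^a W† ≈ X^{u₁a} Z^{v₁a}` and `W Z^b W† ≈ X^{u₂b} Z^{v₂b}` iff
(1) `gcd(u₁, v₁, d/a) = 1 = gcd(u₂, v₂, d/b)`,
(2) `(u₁v₂ - u₂v₁)·a·b ≡ a·b (mod d)`, and
(3) `gcd(u₁v₂ - u₂v₁, d/a, d/b) = 1`. -/
theorem uc_equiv_Xa_Zb_iff (d : ℕ) (hd : 3 ≤ d) (a b : ℕ)
    (ha : a ∣ d) (hb : b ∣ d) (ha0 : 0 < a) (hb0 : 0 < b) (had : a < d) (hbd : b < d)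
    (u₁ v₁ u₂ v₂ : ℤ)
    (hu₁0 : 0 ≤ u₁) (hu₁ : u₁ < ((d / a : ℕ) : ℤ)) (hv₁0 : 0 ≤ v₁) (hv₁ : v₁ < ((d / a : ℕ) : ℤ))
    (hu₂0 : 0 ≤ u₂) (hu₂ : u₂ < ((d / b : ℕ) : ℤ)) (hv₂0 : 0 ≤ v₂) (hv₂ : v₂ < ((d / b : ℕ) : ℤ)) :
    (∃ W ∈ Matrix.unitaryGroup (Fin d) ℂ,
        PhaseEq (W * Xpow d (a : ℤ) * Wᴴ) (GPM d (u₁ * a) (v₁ * a)) ∧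
        PhaseEq (W * Zpow d (b : ℤ) * Wᴴ) (GPM d (u₂ * b) (v₂ * b))) ↔
    (Int.gcd u₁ (Int.gcd v₁ ((d / a : ℕ) : ℤ) : ℤ) = 1 ∧
     Int.gcd u₂ (Int.gcd v₂ ((d / b : ℕ) : ℤ) : ℤ) = 1 ∧
     (u₁ * v₂ - u₂ * v₁) * a * b ≡ (a : ℤ) * b [ZMOD (d : ℤ)] ∧
     Int.gcd (u₁ * v₂ - u₂ * v₁) (Int.gcd ((d / a : ℕ) : ℤ) ((d / b : ℕ) : ℤ) : ℤ) = 1) := by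
  have : NeZero d := ⟨by omega⟩
  have hA : (a : ℤ) * ((d / a : ℕ) : ℤ) = d := by exact_mod_cast Nat.mul_div_cancel' ha
  have hB : (b : ℤ) * ((d / b : ℕ) : ℤ) = d := by exact_mod_cast Nat.mul_div_cancel' hb
  constructor
  · rintro ⟨W, hW, hX, hZ⟩
    exact GeneralizedPauli.conditions_of_unitary hA hB hu₁0 hv₁0 hu₂0 hv₂0 hW hX hZ
  · rintro ⟨h₁, h₂, hdet, h₃⟩
    exact GeneralizedPauli.exists_unitary_of_conditions hA hB h₁ h₂ hdet h₃
end
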